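/- arXiv:2004.01214 — 6 statements merged into one kernel-verified Lean document; each statement's English description precedes it below -/
import Mathlib

section
/- Let G be a finite group containing subgroups H₁ and H₂ such that H₁ ∩ H₂ = {1} and every element of G is a product h₁h₂ with h₁ ∈ H₁, h₂ ∈ H₂ (equivalently H₁H₂ = G). If H₁ contains a Hadamard difference set and H₂ contains a Hadamard difference set, then G contains a Hadamard difference set. -/
/-!
Encode a subset `D` of a finite group by its sign function `s`, equal to `-1` on `D` and to `1` off
`D`. Counting pairs shows that the autocorrelation `∑_{a b⁻¹ = u} s a * s b` equals `v - 4 k + 4 N(u)`,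
where `N(u)` is the number of representations `u = x y⁻¹` with `x, y ∈ D` (`autocorr_sgn`). Hence `D`
is a Hadamard difference set exactly when the autocorrelation vanishes at every `u ≠ 1`; at `u = 1`
it is always `v`.

Given `D₁ ⊆ H₁` and `D₂ ⊆ H₂` with sign functions `s₁`, `s₂`, every element of `G` is uniquely `a c`
with `a ∈ H₁`, `c ∈ H₂`, and the subset with sign function `a c ↦ s₁ a * s₂ c` works. In the group
ring this is the computation `(F₁ F₂)(F₁ F₂)* = F₁ (F₂ F₂*) F₁* = |H₂| F₁ F₁* = |H₁| |H₂|`, which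
needs no commutation between `H₁` and `H₂`. Here it is carried out with explicit sums: the condition
`(a c) (b d)⁻¹ = g` is rewritten as `c d⁻¹ = a⁻¹ g b`, and the sum over `c, d` is evaluated first.
-/

/-- `D` is a Hadamard difference set in the finite group `G`: for some `k`, `l`,
`D` is a `(v,k,l)`-difference set (every non-identity `g` has exactly `l`
representations `x * y⁻¹` with `x, y ∈ D`) whose parameters satisfy `v = 4 * (k - l)`. -/
def IsHadamardDiffSet {G : Type*} [Group G] (D : Set G) : Prop :=
  ∃ k l : ℕ,
    Nat.card D = k ∧
    (∀ g : G, g ≠ 1 → Nat.card {p : D × D // (p.1 : G) * (p.2 : G)⁻¹ = g} = l) ∧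
    Nat.card G + 4 * l = 4 * k

/-- A group is a Hadamard group if it contains a Hadamard difference set. -/
def IsHadamardGroup (G : Type*) [Group G] : Prop :=
  ∃ D : Set G, IsHadamardDiffSet D

open Classical in
/-- The sign function of a set: `-1` on the set and `1` off it. -/
noncomputable def sgn {G : Type*} (D : Set G) (x : G) : ℤ := if x ∈ D then -1 else 1

open Classical in
/-- The autocorrelation `∑_{a b⁻¹ = u} s a * s b` of a function on a finite group. -/
noncomputable def autocorr {G : Type*} [Group G] [Fintype G] (s : G → ℤ) (u : G) : ℤ :=
  ∑ a, ∑ b, if a * b⁻¹ = u then s a * s b else 0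

lemma sgn_mul_self {G : Type*} (D : Set G) (x : G) : sgn D x * sgn D x = 1 := by
  unfold sgn; split_ifs <;> norm_num

lemma autocorr_eq {G : Type*} [Group G] [Fintype G] (s : G → ℤ) (u : G) :
    autocorr s u = ∑ b, s (u * b) * s b := by
  classical
  unfold autocorr
  rw [Finset.sum_comm]
  refine Finset.sum_congr rfl fun b _ => ?_
  simp [mul_inv_eq_iff_eq_mul]

lemma autocorr_one {G : Type*} [Group G] [Fintype G] (D : Set G) :
    autocorr (sgn D) 1 = Nat.card G := by
  simp [autocorr_eq, sgn_mul_self]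

/-- The autocorrelation of a sign function in terms of `v`, `k` and the number of representations
of `u` as a quotient of elements of `D`. -/
lemma autocorr_sgn {G : Type*} [Group G] [Fintype G] (D : Set G) (u : G) :
    autocorr (sgn D) u = Nat.card G - 4 * Nat.card D
      + 4 * Nat.card {p : D × D // (p.1 : G) * (p.2 : G)⁻¹ = u} := by
  classical
  have hk : (Nat.card D : ℤ) = ∑ b : G, if b ∈ D then 1 else 0 := by
    simp [Nat.card_eq_fintype_card, Fintype.card_subtype]
  have hk' : (Nat.card D : ℤ) = ∑ b : G, if u * b ∈ D then 1 else 0 := by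
    rw [hk]
    exact (Equiv.sum_comp (Equiv.mulLeft u) fun b => if b ∈ D then (1 : ℤ) else 0).symm
  -- A representation `u = x * y⁻¹` is determined by `y`.
  have hN : (Nat.card {p : D × D // (p.1 : G) * (p.2 : G)⁻¹ = u} : ℤ)
      = ∑ b : G, if u * b ∈ D ∧ b ∈ D then 1 else 0 := by
    let e : {p : D × D // (p.1 : G) * (p.2 : G)⁻¹ = u} ≃ {b : G // u * b ∈ D ∧ b ∈ D} :=
      { toFun := fun p => ⟨p.1.2, by
          have h := p.2
          rw [mul_inv_eq_iff_eq_mul] at h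
          exact h ▸ p.1.1.2, p.1.2.2⟩
        invFun := fun b => ⟨(⟨u * b, b.2.1⟩, ⟨b, b.2.2⟩), by simp⟩
        left_inv := by
          rintro ⟨⟨⟨x, hx⟩, ⟨y, hy⟩⟩, h⟩
          simp only [mul_inv_eq_iff_eq_mul] at h
          simp [h]
        right_inv := fun b => rfl }
    rw [Nat.card_congr e]
    simp [Nat.card_eq_fintype_card, Fintype.card_subtype]
  have hv : (Nat.card G : ℤ) = ∑ b : G, 1 := by simp
  have h4 : (4 : ℤ) * Nat.card D = 2 * Nat.card D + 2 * Nat.card D := by ring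
  rw [autocorr_eq, h4, hN]
  nth_rewrite 1 [hk]
  rw [hk', hv, Finset.mul_sum, Finset.mul_sum, Finset.mul_sum, ← Finset.sum_add_distrib,
    ← Finset.sum_sub_distrib, ← Finset.sum_add_distrib]
  refine Finset.sum_congr rfl fun b _ => ?_
  by_cases h1 : u * b ∈ D <;> by_cases h2 : b ∈ D <;> simp [sgn, h1, h2]

open Classical in
lemma IsHadamardDiffSet.autocorr_eq_ite {G : Type*} [Group G] [Fintype G] {D : Set G}
    (hD : IsHadamardDiffSet D) (u : G) :
    autocorr (sgn D) u = if u = 1 then (Nat.card G : ℤ) else 0 := by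
  split_ifs with hu
  · rw [hu, autocorr_one]
  · obtain ⟨k, l, hk, hl, h⟩ := hD
    rw [autocorr_sgn, hl u hu, hk]
    omega

/-- The autocorrelation relation on a subgroup, with the quotient compared to an arbitrary element
of the ambient group: outside the subgroup both sides vanish. -/
lemma IsHadamardDiffSet.sum_subgroup {G : Type*} [Group G] [DecidableEq G] {H : Subgroup G}
    [Fintype H] {D : Set H} (hD : IsHadamardDiffSet D) (u : G) :
    (∑ a : H, ∑ b : H, if (a : G) * (b : G)⁻¹ = u then sgn D a * sgn D b else 0)
      = if u = 1 then (Nat.card H : ℤ) else 0 := by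
  classical
  by_cases hu : u ∈ H
  · have h := hD.autocorr_eq_ite ⟨u, hu⟩
    simpa [autocorr, Subtype.ext_iff] using h
  · rw [if_neg (fun h : u = 1 => hu (h ▸ H.one_mem))]
    refine Finset.sum_eq_zero fun a _ => Finset.sum_eq_zero fun b _ => ?_
    exact if_neg fun h : (a : G) * (b : G)⁻¹ = u => hu (h ▸ H.mul_mem a.2 (H.inv_mem b.2))

theorem dillon_product_construction {G : Type*} [Group G] [Finite G]
    (H₁ H₂ : Subgroup G) (h_inter : H₁ ⊓ H₂ = ⊥)
    (h_prod : ∀ g : G, ∃ h₁ ∈ H₁, ∃ h₂ ∈ H₂, g = h₁ * h₂)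
    (h1 : IsHadamardGroup H₁) (h2 : IsHadamardGroup H₂) :
    IsHadamardGroup G := by
  classical
  obtain ⟨D₁, hD₁⟩ := h1
  obtain ⟨D₂, hD₂⟩ := h2
  have := Fintype.ofFinite G
  have hbij : Function.Bijective fun p : H₁ × H₂ => (p.1 : G) * (p.2 : G) := by
    refine ⟨Subgroup.mul_injective_of_disjoint (disjoint_iff.mpr h_inter), fun g => ?_⟩
    obtain ⟨a, ha, c, hc, rfl⟩ := h_prod g
    exact ⟨(⟨a, ha⟩, ⟨c, hc⟩), rfl⟩
  let e : H₁ × H₂ ≃ G := Equiv.ofBijective _ hbij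
  have he : ∀ p, e p = (p.1 : G) * (p.2 : G) := fun p => rfl
  let D : Set G := {g | sgn D₁ (e.symm g).1 * sgn D₂ (e.symm g).2 = -1}
  have hs : ∀ p, sgn D (e p) = sgn D₁ p.1 * sgn D₂ p.2 := by
    intro p
    by_cases ha : p.1 ∈ D₁ <;> by_cases hc : p.2 ∈ D₂ <;> simp [sgn, D, ha, hc]
  have hcorr : ∀ g : G, g ≠ 1 → autocorr (sgn D) g = 0 := by
    intro g hg
    calc autocorr (sgn D) g
        = ∑ p : H₁ × H₂, ∑ q : H₁ × H₂,
            if e p * (e q)⁻¹ = g then sgn D (e p) * sgn D (e q) else 0 := by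
          unfold autocorr
          rw [← e.sum_comp]
          exact Finset.sum_congr rfl fun p _ => (e.sum_comp _).symm
      _ = ∑ a : H₁, ∑ b : H₁, sgn D₁ a * sgn D₁ b * ∑ c : H₂, ∑ d : H₂,
            if (c : G) * (d : G)⁻¹ = (a : G)⁻¹ * g * b then sgn D₂ c * sgn D₂ d else 0 := by
          simp only [Fintype.sum_prod_type, Finset.mul_sum]
          refine Finset.sum_congr rfl fun a _ => ?_
          rw [Finset.sum_comm]
          refine Finset.sum_congr rfl fun b _ => Finset.sum_congr rfl fun c _ =>
            Finset.sum_congr rfl fun d _ => ?_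
          have hiff : e (a, c) * (e (b, d))⁻¹ = g ↔ (c : G) * (d : G)⁻¹ = (a : G)⁻¹ * g * b := by
            rw [he, he]
            constructor
            · rintro rfl; group
            · intro h
              calc (a : G) * c * ((b : G) * d)⁻¹ = a * (c * (d : G)⁻¹) * (b : G)⁻¹ := by group
                _ = g := by rw [h]; group
          simp only [hiff, hs, mul_ite, mul_zero]
          congr 1
          ring
      _ = ∑ a : H₁, ∑ b : H₁, Nat.card H₂ *
            if (a : G) * (b : G)⁻¹ = g then sgn D₁ a * sgn D₁ b else 0 := by
          refine Finset.sum_congr rfl fun a _ => Finset.sum_congr rfl fun b _ => ?_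
          rw [hD₂.sum_subgroup]
          have hiff : (a : G)⁻¹ * g * b = 1 ↔ (a : G) * (b : G)⁻¹ = g := by
            rw [mul_eq_one_iff_eq_inv, inv_mul_eq_iff_eq_mul, eq_comm]
          simp only [hiff, mul_ite, mul_zero]
          congr 1
          ring
      _ = 0 := by
          simp only [← Finset.mul_sum]
          rw [hD₁.sum_subgroup, if_neg hg, mul_zero]
  -- The parameter equation rules out the trivial group, so `l` can be read off at some `g₀ ≠ 1`.
  have hnt : Nontrivial G := by
    by_contra h
    rw [not_nontrivial_iff_subsingleton] at h
    obtain ⟨k, l, -, -, hkl⟩ := hD₁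
    rw [Nat.card_unique] at hkl
    omega
  obtain ⟨g₀, hg₀⟩ := exists_ne (1 : G)
  have h₀ := hcorr g₀ hg₀
  rw [autocorr_sgn] at h₀
  refine ⟨D, _, Nat.card {p : D × D // (p.1 : G) * (p.2 : G)⁻¹ = g₀}, rfl, fun g hg => ?_, ?_⟩
  · have h := hcorr g hg
    rw [autocorr_sgn] at h
    omega
  · omega
end

section
/- Let d ≥ 1 and let G be a group of order 2^{2d+2} containing a normal subgroup K with |K| < 2^d such that the quotient group G/K is cyclic. Then G contains no Hadamard difference set. -/
open NumberField

/-- If `σ` preserves the prime `π` up to a unit, then `f` and `σ f` are equally divisible by `π`,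
so each takes half of the power of `π` dividing `f * σ f`. -/
lemma pow_dvd_of_pow_two_mul_dvd_mul_conj {R : Type*} [CommRing R] [IsDomain R] (σ : R ≃+* R)
    {π : R} (hπ : Prime π) (hσ : Associated (σ π) π) (j : ℕ) :
    ∀ f : R, π ^ (2 * j) ∣ f * σ f → π ^ j ∣ f := by
  induction j with
  | zero => simp
  | succ j ih =>
    intro f hf
    have hdvd : π ∣ f := by
      have h1 : π ∣ f * σ f := (dvd_pow_self π (by omega)).trans hf
      rcases hπ.dvd_or_dvd h1 with h | h
      · exact h
      · exact (map_dvd_iff σ).1 (hσ.dvd.trans h)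
    obtain ⟨g, rfl⟩ := hdvd
    rw [pow_succ']
    refine mul_dvd_mul_left π (ih g ?_)
    obtain ⟨u, hu⟩ := hσ.symm
    have h2 : π ^ 2 * π ^ (2 * j) ∣ π ^ 2 * (g * σ g * u) := by
      convert hf using 1
      · ring
      · rw [map_mul, ← hu]; ring
    have h3 := (mul_dvd_mul_iff_left (pow_ne_zero 2 hπ.ne_zero)).1 h2
    exact (Units.dvd_mul_right).1 h3

/-- Total ramification of `2` in the `2 ^ (M + 1)`-th cyclotomic field. -/
lemma two_associated {F : Type*} [Field F] [NumberField F] {M : ℕ}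
    [IsCyclotomicExtension {2 ^ (M + 1)} ℚ F] {ζ : F} (hζ : IsPrimitiveRoot ζ (2 ^ (M + 1))) :
    Associated (2 : 𝓞 F) ((hζ.toInteger - 1) ^ Module.finrank ℚ F) := by
  have h := IsCyclotomicExtension.Rat.map_eq_span_zeta_sub_one_pow 2 M hζ
  rw [Ideal.map_span, Set.image_singleton, Ideal.span_singleton_pow,
    Ideal.span_singleton_eq_span_singleton] at h
  simpa using h

/-- Complex conjugation on the ring of integers, characterised by inverting the roots of unity. -/
lemma exists_conj (F : Type*) [Field F] [NumberField F] (M : ℕ)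
    [IsCyclotomicExtension {2 ^ (M + 1)} ℚ F] : ∃ σ : 𝓞 F ≃+* 𝓞 F,
    ∀ x : (𝓞 F)ˣ, x ^ (2 ^ (M + 1)) = 1 → σ x = (x⁻¹ : (𝓞 F)ˣ) := by
  have hζ := IsCyclotomicExtension.zeta_spec (2 ^ (M + 1)) ℚ F
  let τ := IsCyclotomicExtension.fromZetaAut hζ.inv
      (Polynomial.cyclotomic.irreducible_rat (NeZero.pos (2 ^ (M + 1))))
  refine ⟨RingOfIntegers.mapRingEquiv τ.toRingEquiv, fun x hx ↦ ?_⟩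
  have hx' : (((x : 𝓞 F) : F)) ^ (2 ^ (M + 1)) = 1 := by
    have := congrArg (fun u : (𝓞 F)ˣ ↦ ((u : 𝓞 F) : F)) hx
    simpa using this
  obtain ⟨i, -, hi⟩ := hζ.eq_pow_of_pow_eq_one hx'
  apply RingOfIntegers.ext
  rw [RingOfIntegers.mapRingEquiv_apply]
  have h1 : τ ((x : 𝓞 F) : F) = ((x : 𝓞 F) : F)⁻¹ := by
    rw [← hi, map_pow, IsCyclotomicExtension.fromZetaAut_spec, inv_pow]
  have h2 : ((x : 𝓞 F) : F) * (((x⁻¹ : (𝓞 F)ˣ) : 𝓞 F) : F) = 1 := by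
    rw [← map_mul, Units.mul_inv, map_one]
  exact h1.trans (eq_inv_of_mul_eq_one_right h2).symm

/-- Since `ζ ^ (2 ^ M) = -1`, the sum has coordinates `a j - a (2 ^ M + j)` in the power basis;
these are too small to be nonzero multiples of `q`. -/
lemma sum_eq_zero_of_dvd {F : Type*} [Field F] [NumberField F] {M : ℕ}
    [IsCyclotomicExtension {2 ^ (M + 1)} ℚ F] {ζ : F} (hζ : IsPrimitiveRoot ζ (2 ^ (M + 1)))
    (q : ℕ) (a : ℕ → ℕ) (ha : ∀ j, a j < q)
    (h : (q : 𝓞 F) ∣ ∑ j ∈ Finset.range (2 ^ (M + 1)), (a j : 𝓞 F) * hζ.toInteger ^ j) :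
    ∑ j ∈ Finset.range (2 ^ (M + 1)), (a j : 𝓞 F) * hζ.toInteger ^ j = 0 := by
  have hz : hζ.toInteger ^ (2 ^ M) = -1 := by
    have h2 : IsPrimitiveRoot (hζ.toInteger ^ (2 ^ M)) 2 :=
      hζ.toInteger_isPrimitiveRoot.pow (by positivity) (pow_succ 2 M)
    exact h2.eq_neg_one_of_two_right
  have hfold : ∑ j ∈ Finset.range (2 ^ (M + 1)), (a j : 𝓞 F) * hζ.toInteger ^ j =
      ∑ j ∈ Finset.range (2 ^ M), ((a j : ℤ) - a (2 ^ M + j)) • hζ.toInteger ^ j := by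
    rw [show Finset.range (2 ^ (M + 1)) = Finset.range (2 ^ M + 2 ^ M) by rw [pow_succ, mul_two],
      Finset.sum_range_add, ← Finset.sum_add_distrib]
    refine Finset.sum_congr rfl fun j _ ↦ ?_
    rw [pow_add (hζ.toInteger), hz, zsmul_eq_mul]
    push_cast
    ring
  rw [hfold] at h ⊢
  set b := hζ.integralPowerBasis
  have hdim : b.dim = 2 ^ M := by
    rw [hζ.integralPowerBasis_dim, Nat.totient_prime_pow_succ Nat.prime_two]; simp
  have hb : ∑ j ∈ Finset.range (2 ^ M), ((a j : ℤ) - a (2 ^ M + j)) • hζ.toInteger ^ j =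
      ∑ i : Fin b.dim, ((a i : ℤ) - a (2 ^ M + i)) • b.basis i := by
    rw [← hdim, ← Fin.sum_univ_eq_sum_range
      (fun j ↦ ((a j : ℤ) - a (b.dim + j)) • hζ.toInteger ^ j)]
    refine Finset.sum_congr rfl fun i _ ↦ ?_
    rw [b.basis_eq_pow, hζ.integralPowerBasis_gen]
  rw [hb] at h ⊢
  obtain ⟨g, hg⟩ := h
  refine Finset.sum_eq_zero fun i _ ↦ ?_
  have hc : ((a i : ℤ) - a (2 ^ M + i)) = q * b.basis.repr g i := by
    have := congrArg (fun x ↦ b.basis.repr x i) hg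
    simp only [b.basis.repr_sum_self] at this
    rw [this, ← nsmul_eq_mul, map_nsmul]
    simp
  have h0 : ((a i : ℤ) - a (2 ^ M + i)) = 0 := by
    refine Int.eq_zero_of_abs_lt_dvd ⟨_, hc⟩ ?_
    have := ha i
    have := ha (2 ^ M + i)
    rw [abs_lt]; omega
  rw [h0, zero_smul]

/-- Every ring automorphism `σ` fixes the unique prime above `2`, so the `2`-power in `f * σ f` is
shared equally by the two factors. -/
lemma two_pow_dvd {F : Type*} [Field F] [NumberField F] {M : ℕ}
    [IsCyclotomicExtension {2 ^ (M + 1)} ℚ F] {ζ : F} (hζ : IsPrimitiveRoot ζ (2 ^ (M + 1)))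
    (σ : 𝓞 F ≃+* 𝓞 F) (d : ℕ) (f : 𝓞 F)
    (hf : f * σ f = 2 ^ (2 * d)) : 2 ^ d ∣ f := by
  have h2 := two_associated hζ
  have key := pow_dvd_of_pow_two_mul_dvd_mul_conj σ hζ.zeta_sub_one_prime
    (hζ.toInteger_isPrimitiveRoot.associated_sub_one_map_sub_one σ.toIntAlgEquiv).symm
    (Module.finrank ℚ F * d) f (by
      rw [hf, mul_left_comm, pow_mul]
      exact (h2.symm.pow_pow).dvd)
  rw [pow_mul] at key
  exact h2.pow_pow.dvd.trans key

/-- The difference-set identity `D * D⁻¹ = (k - l) + l * G` in the group ring, evaluated at a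
nontrivial character. -/
lemma sum_mul_sum_inv {G R : Type*} [Group G] [Fintype G] [DecidableEq G] [CommRing R] [IsDomain R]
    (χ : G →* Rˣ) (hχ : χ ≠ 1) (S : Finset G) (l : ℕ)
    (hS : ∀ g : G, g ≠ 1 → ((S ×ˢ S).filter fun p ↦ p.1 * p.2⁻¹ = g).card = l) :
    (∑ x ∈ S, (χ x : R)) * ∑ x ∈ S, (((χ x)⁻¹ : Rˣ) : R) = (S.card : R) - l := by
  have hsum : ∑ g : G, (χ g : R) = 0 := by
    refine sum_hom_units_eq_zero ((Units.coeHom R).comp χ) fun h ↦ hχ ?_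
    ext g
    simpa using DFunLike.congr_fun h g
  have hone : ((S ×ˢ S).filter fun p ↦ p.1 * p.2⁻¹ = 1).card = S.card := by
    have : ((S ×ˢ S).filter fun p ↦ p.1 * p.2⁻¹ = 1) = S.diag := by
      ext ⟨x, y⟩
      simp only [Finset.mem_filter, Finset.mem_product, Finset.mem_diag, mul_inv_eq_one]
      constructor
      · rintro ⟨⟨h1, -⟩, h2⟩; exact ⟨h1, h2⟩
      · rintro ⟨h1, rfl⟩; exact ⟨⟨h1, h1⟩, rfl⟩
    rw [this, Finset.diag_card]
  calc (∑ x ∈ S, (χ x : R)) * ∑ x ∈ S, (((χ x)⁻¹ : Rˣ) : R)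
      = ∑ p ∈ S ×ˢ S, (χ (p.1 * p.2⁻¹) : R) := by
        rw [Finset.sum_mul_sum, Finset.sum_product]
        simp
    _ = ∑ g : G, ∑ p ∈ (S ×ˢ S).filter (fun p ↦ p.1 * p.2⁻¹ = g), (χ (p.1 * p.2⁻¹) : R) :=
        (Finset.sum_fiberwise _ _ _).symm
    _ = ∑ g : G, (((S ×ˢ S).filter fun p ↦ p.1 * p.2⁻¹ = g).card : R) * χ g := by
        refine Finset.sum_congr rfl fun g _ ↦ ?_
        rw [Finset.sum_congr rfl (g := fun _ ↦ (χ g : R))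
          (fun p hp ↦ by rw [(Finset.mem_filter.1 hp).2]), Finset.sum_const, nsmul_eq_mul]
    _ = ∑ g : G, ((l : R) * χ g + if g = 1 then (S.card : R) - l else 0) := by
        refine Finset.sum_congr rfl fun g _ ↦ ?_
        split_ifs with h
        · rw [h, hone]; simp
        · rw [hS g h, add_zero]
    _ = (S.card : R) - l := by
        rw [Finset.sum_add_distrib, ← Finset.mul_sum, hsum]; simp

theorem turyn_nonexistence {G : Type*} [Group G] [Finite G] (d : ℕ) (hd : 1 ≤ d)
    (hG : Nat.card G = 2 ^ (2 * d + 2)) (K : Subgroup G) [K.Normal]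
    (hK : Nat.card K < 2 ^ d) (hcyc : IsCyclic (G ⧸ K)) :
    ¬ IsHadamardGroup G := by
  rintro ⟨D, k, l, hk, hl, hkl⟩
  classical
  have := Fintype.ofFinite G
  obtain ⟨M, hM⟩ : ∃ M, Nat.card (G ⧸ K) = 2 ^ (M + 1) := by
    have hmul := K.card_eq_card_quotient_mul_card_subgroup
    have hdvd : Nat.card (G ⧸ K) ∣ 2 ^ (2 * d + 2) := hG ▸ ⟨_, hmul⟩
    obtain ⟨m, -, hm⟩ := (Nat.dvd_prime_pow Nat.prime_two).1 hdvd
    cases m with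
    | zero =>
      rw [hm, hG, pow_zero, one_mul] at hmul
      have : 2 ^ d ≤ 2 ^ (2 * d + 2) := Nat.pow_le_pow_right two_pos (by omega)
      omega
    | succ M => exact ⟨M, hm⟩
  let F := CyclotomicField (2 ^ (M + 1)) ℚ
  have : IsCyclotomicExtension {2 ^ (M + 1)} ℚ F :=
    CyclotomicField.isCyclotomicExtension (2 ^ (M + 1)) ℚ
  have : NumberField F := IsCyclotomicExtension.numberField {2 ^ (M + 1)} ℚ F
  have hζ : IsPrimitiveRoot (IsCyclotomicExtension.zeta (2 ^ (M + 1)) ℚ F) (2 ^ (M + 1)) :=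
    IsCyclotomicExtension.zeta_spec (2 ^ (M + 1)) ℚ F
  have hz := hζ.toInteger_isPrimitiveRoot
  set z := hζ.toInteger with hzdef
  let e : (G ⧸ K) ≃* rootsOfUnity (2 ^ (M + 1)) (𝓞 F) :=
    mulEquivOfCyclicCardEq (hM.trans hz.card_rootsOfUnity.symm)
  -- `χ` is the composite of `G → G ⧸ K` with an isomorphism, so its kernel is exactly `K`.
  let χ : G →* (𝓞 F)ˣ := (Subgroup.subtype _).comp (e.toMonoidHom.comp (QuotientGroup.mk' K))
  have hχK : ∀ x y, χ x = χ y ↔ x⁻¹ * y ∈ K := fun x y ↦ by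
    rw [← QuotientGroup.eq, ← e.injective.eq_iff, Subtype.ext_iff]; rfl
  have hχpow : ∀ x, χ x ^ (2 ^ (M + 1)) = 1 := fun x ↦ (e (x : G ⧸ K)).2
  have hχ : χ ≠ 1 := fun h ↦ by
    have hsub : Subsingleton (G ⧸ K) := ⟨fun a b ↦ by
      induction a using QuotientGroup.induction_on with | H x => ?_
      induction b using QuotientGroup.induction_on with | H y => ?_
      exact QuotientGroup.eq.2 ((hχK x y).1 (by rw [h]; rfl))⟩
    rw [Nat.card_of_subsingleton (1 : G ⧸ K)] at hM
    have : 1 < 2 ^ (M + 1) := Nat.one_lt_two_pow (by omega)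
    omega
  obtain ⟨σ, hσ⟩ := exists_conj F M
  set S : Finset G := D.toFinset with hSdef
  have hSk : S.card = k := by rw [← hk, Nat.card_eq_card_toFinset]
  have hSl : ∀ g : G, g ≠ 1 → ((S ×ˢ S).filter fun p ↦ p.1 * p.2⁻¹ = g).card = l := fun g hg ↦ by
    rw [← hl g hg, ← Nat.card_eq_finsetCard]
    refine Nat.card_congr ⟨fun p ↦ ⟨(⟨p.1.1, ?_⟩, ⟨p.1.2, ?_⟩), ?_⟩,
      fun p ↦ ⟨(p.1.1, p.1.2), ?_⟩, fun _ ↦ rfl, fun _ ↦ rfl⟩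
    · exact Set.mem_toFinset.1 (Finset.mem_product.1 (Finset.mem_filter.1 p.2).1).1
    · exact Set.mem_toFinset.1 (Finset.mem_product.1 (Finset.mem_filter.1 p.2).1).2
    · exact (Finset.mem_filter.1 p.2).2
    · simpa [S] using p.2
  set f : 𝓞 F := ∑ x ∈ S, (χ x : 𝓞 F) with hf
  have hnorm : f * σ f = 2 ^ (2 * d) := by
    have h1 : σ f = ∑ x ∈ S, (((χ x)⁻¹ : (𝓞 F)ˣ) : 𝓞 F) := by
      rw [hf, map_sum]
      exact Finset.sum_congr rfl fun x _ ↦ hσ _ (hχpow x)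
    rw [h1, sum_mul_sum_inv χ hχ S l hSl, hSk]
    have : k = l + 2 ^ (2 * d) := by
      rw [hG, pow_add] at hkl; omega
    rw [this]; push_cast; ring
  have hdvd := two_pow_dvd hζ σ d f hnorm
  -- Group the terms of `f` by their value; each fibre lies in one coset of `K`.
  let a : ℕ → ℕ := fun j ↦ (S.filter fun x ↦ (χ x : 𝓞 F) = z ^ j).card
  have ha : ∀ j, a j < 2 ^ d := fun j ↦ by
    refine lt_of_le_of_lt ?_ hK
    rcases (S.filter fun x ↦ (χ x : 𝓞 F) = z ^ j).eq_empty_or_nonempty with h | ⟨x₀, hx₀⟩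
    · simp [a, h]
    · change (S.filter fun x ↦ (χ x : 𝓞 F) = z ^ j).card ≤ _
      rw [← Nat.card_eq_finsetCard]
      refine Nat.card_le_card_of_injective (fun x ↦ (⟨x₀⁻¹ * x.1, ?_⟩ : K)) ?_
      · refine (hχK _ _).1 (Units.ext ?_)
        rw [(Finset.mem_filter.1 hx₀).2, (Finset.mem_filter.1 x.2).2]
      · intro x y hxy
        exact Subtype.ext (mul_left_cancel (congrArg Subtype.val hxy))
  have hfa : f = ∑ j ∈ Finset.range (2 ^ (M + 1)), (a j : 𝓞 F) * z ^ j := by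
    have hmaps : ∀ x ∈ S, (χ x : 𝓞 F) ∈ (Finset.range (2 ^ (M + 1))).image (z ^ ·) :=
      fun x _ ↦ by
        obtain ⟨i, hi, hix⟩ := hz.eq_pow_of_pow_eq_one (ξ := (χ x : 𝓞 F))
          (by rw [← Units.val_pow_eq_pow_val, hχpow, Units.val_one])
        exact Finset.mem_image.2 ⟨i, Finset.mem_range.2 hi, hix⟩
    rw [hf, ← Finset.sum_fiberwise_of_maps_to hmaps, Finset.sum_image]
    · refine Finset.sum_congr rfl fun j _ ↦ ?_
      rw [Finset.sum_congr rfl (g := fun _ ↦ z ^ j) (fun x hx ↦ (Finset.mem_filter.1 hx).2),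
        Finset.sum_const, nsmul_eq_mul]
    · intro i hi j hj hij
      exact hz.pow_inj (by simpa using hi) (by simpa using hj) hij
  have hf0 : f = 0 := by
    rw [hfa] at hdvd ⊢
    exact sum_eq_zero_of_dvd hζ (2 ^ d) a ha (by exact_mod_cast hdvd)
  rw [hf0, zero_mul] at hnorm
  exact pow_ne_zero _ two_ne_zero hnorm.symm
end

section
/- Let d ≥ 1 and let G be a finite abelian group of order 2^{2d+2} containing a Hadamard difference set. Then the exponent of G is at most 2^{d+2}. -/
open Polynomial Finset

/-! ### Autocorrelation of a Hadamard difference set -/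

open Classical in
/-- The `±1`-valued indicator of `D`, equal to `-1` exactly on `D`. -/
noncomputable def signInd {G : Type*} (D : Set G) (x : G) : ℤ := if x ∈ D then -1 else 1

lemma abs_signInd {G : Type*} (D : Set G) (x : G) : |signInd D x| = 1 := by
  unfold signInd; split_ifs <;> simp

lemma hadamard_autocorrelation {G : Type*} [Group G] [Fintype G] {D : Set G}
    (hD : IsHadamardDiffSet D) {g : G} (hg : g ≠ 1) :
    ∑ x, signInd D (g * x) * signInd D x = 0 := by
  classical
  obtain ⟨k, l, hk, hl, hv⟩ := hD
  have e : {p : D × D // (p.1 : G) * (p.2 : G)⁻¹ = g} ≃ {x : G // g * x ∈ D ∧ x ∈ D} :=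
    { toFun := fun p => ⟨p.1.2, by
        have h := p.2
        rw [mul_inv_eq_iff_eq_mul] at h
        exact ⟨h ▸ p.1.1.2, p.1.2.2⟩⟩
      invFun := fun x => ⟨(⟨g * x, x.2.1⟩, ⟨x, x.2.2⟩), by simp⟩
      left_inv := by
        rintro ⟨⟨⟨a, ha⟩, ⟨b, hb⟩⟩, h⟩
        simp only [Subtype.mk.injEq, Prod.mk.injEq, and_true]
        rw [mul_inv_eq_iff_eq_mul] at h
        exact h.symm
      right_inv := by rintro ⟨x, hx⟩; rfl }
  have hl' := hl g hg
  rw [Nat.card_congr e, Nat.card_eq_fintype_card, Fintype.card_subtype] at hl'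
  have hk' : #{x : G | x ∈ D} = k := by
    rw [← hk, Nat.card_eq_fintype_card, ← Fintype.card_subtype]
  have hk'' : ∑ x : G, (if g * x ∈ D then (1 : ℤ) else 0) = k := by
    refine (Equiv.sum_comp (Equiv.mulLeft g) (fun y => if y ∈ D then (1 : ℤ) else 0)).trans ?_
    rw [Finset.sum_boole, hk']
  have key : ∀ x, signInd D (g * x) * signInd D x =
      1 - 2 * (if g * x ∈ D then (1 : ℤ) else 0) - 2 * (if x ∈ D then (1 : ℤ) else 0)
        + 4 * (if g * x ∈ D ∧ x ∈ D then (1 : ℤ) else 0) := by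
    intro x
    unfold signInd
    by_cases h1 : g * x ∈ D <;> by_cases h2 : x ∈ D <;> simp [h1, h2]
  simp_rw [key]
  rw [Finset.sum_add_distrib, Finset.sum_sub_distrib, Finset.sum_sub_distrib, ← Finset.mul_sum,
    ← Finset.mul_sum, ← Finset.mul_sum, hk'', Finset.sum_boole, Finset.sum_boole, hk', hl']
  simp only [sum_const, card_univ, nsmul_eq_mul, mul_one]
  rw [Nat.card_eq_fintype_card] at hv
  omega

lemma character_sum_mul {G R : Type*} [CommGroup G] [Fintype G] [CommRing R] {D : Set G}
    (hD : IsHadamardDiffSet D) (χ : G →* Rˣ) :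
    (∑ x, (signInd D x : R) * (χ x : R)) * (∑ x, (signInd D x : R) * ((χ x)⁻¹ : Rˣ)) =
      (Fintype.card G : R) := by
  classical
  calc _ = ∑ y, ∑ x, ((signInd D x : R) * (χ x : R)) * ((signInd D y : R) * ((χ y)⁻¹ : Rˣ)) := by
        rw [Finset.sum_mul_sum, Finset.sum_comm]
    _ = ∑ y, ∑ u, (χ u : R) * ((signInd D (u * y) * signInd D y : ℤ) : R) := by
        refine Finset.sum_congr rfl fun y _ => ?_
        refine (Fintype.sum_equiv (Equiv.mulRight y) _ _ fun u => ?_).symm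
        have : (χ y : R) * ((χ y)⁻¹ : Rˣ) = 1 := by simp
        simp only [Equiv.coe_mulRight, map_mul, Units.val_mul, Int.cast_mul]
        linear_combination (-(χ u : R) * (signInd D (u * y) : R) * signInd D y) * this
    _ = ∑ u, (χ u : R) * ((∑ y, signInd D (u * y) * signInd D y : ℤ) : R) := by
        rw [Finset.sum_comm]
        simp [Finset.mul_sum]
    _ = _ := by
        rw [Finset.sum_eq_single 1]
        · have : ∀ y, signInd D y * signInd D y = 1 := by
            intro y; rw [← abs_mul_abs_self, abs_signInd, one_mul]
          simp [this]
        · intro u _ hu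
          rw [hadamard_autocorrelation hD hu]; simp
        · simp

/-! ### Divisibility at a totally ramified prime -/

/-- If `π` is a prime with `π ^ n = 2 w`, `π ∤ w`, then `n` is the `π`-adic valuation of `2`, and
if `b * b' = 2 ^ (2 m)` where `b` has at least the valuation of `b'`, then `b` carries at least half
of the valuation of `2 ^ (2 m)`. -/
lemma two_pow_dvd_of_mul_eq {R : Type*} [CommRing R] [IsDomain R] {π w b b' : R} {n m : ℕ}
    (hπ : Prime π) (hw : ¬ π ∣ w) (h2 : π ^ n = 2 * w) (hb : b * b' = 2 ^ (2 * m))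
    (hdiv : ∀ s, π ^ s ∣ b' → π ^ s ∣ b) : 2 ^ m ∣ b := by
  have h : b * (b' * w ^ (2 * m)) = 1 * π ^ (n * (2 * m)) := by
    rw [pow_mul π, h2, mul_pow, ← hb]; ring
  obtain ⟨i, j, c, c', hij, -, hx, hy⟩ := mul_eq_mul_prime_pow hπ h
  have hj : π ^ j ∣ b' :=
    hπ.pow_dvd_of_dvd_mul_right j (fun h => hw (hπ.dvd_of_dvd_pow h)) ⟨c', by rw [hy]; ring⟩
  have hi : π ^ i ∣ b := ⟨c, by rw [hx]; ring⟩
  have hnm : π ^ (n * m) ∣ b := by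
    have : n * m ≤ i ∨ n * m ≤ j := by
      by_contra! hlt
      have : n * (2 * m) = n * m + n * m := by ring
      omega
    rcases this with h | h
    · exact (pow_dvd_pow _ h).trans hi
    · exact (pow_dvd_pow _ h).trans (hdiv _ hj)
  rw [pow_mul, h2, mul_pow] at hnm
  exact (Dvd.intro _ rfl).trans hnm

/-! ### The ring `ℤ[ζ]` for `ζ` of order `2 ^ (t + 1)` -/

/-- `X ^ (2 ^ t) + 1`, the cyclotomic polynomial of order `2 ^ (t + 1)`. -/
noncomputable abbrev twoPoly (t : ℕ) : ℤ[X] := X ^ (2 ^ t) + 1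

/-- The ring `ℤ[ζ]`, with `ζ` a primitive root of unity of order `2 ^ (t + 1)`. -/
abbrev TwoCyc (t : ℕ) : Type := AdjoinRoot (twoPoly t)

namespace TwoCyc

variable (t : ℕ)

/-- The distinguished root of unity of order `2 ^ (t + 1)`. -/
noncomputable abbrev ζ : TwoCyc t := AdjoinRoot.root (twoPoly t)

lemma twoPoly_eq : twoPoly t = cyclotomic (2 ^ (t + 1)) ℤ := by
  rw [cyclotomic_prime_pow_eq_geom_sum Nat.prime_two]
  simp [Finset.sum_range_succ, add_comm]

lemma twoPoly_monic : (twoPoly t).Monic := by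
  rw [twoPoly_eq]; exact cyclotomic.monic _ _

lemma twoPoly_natDegree : (twoPoly t).natDegree = 2 ^ t :=
  natDegree_X_pow_add_C (r := (1 : ℤ))

instance : IsDomain (TwoCyc t) := by
  apply AdjoinRoot.isDomain_of_prime
  rw [twoPoly_eq]
  exact (cyclotomic.irreducible (by positivity)).prime

lemma ζ_pow : ζ t ^ (2 ^ t) = -1 := by
  have h : AdjoinRoot.mk (twoPoly t) (X ^ (2 ^ t) + 1) = 0 := AdjoinRoot.mk_self
  rw [map_add, map_pow, AdjoinRoot.mk_X, map_one] at h
  exact eq_neg_of_add_eq_zero_left h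

lemma two_ne_zero' : (2 : TwoCyc t) ≠ 0 := by
  intro h
  have h' : AdjoinRoot.mk (twoPoly t) (C 2) = 0 := by
    rw [AdjoinRoot.mk_C]; simpa using h
  rw [AdjoinRoot.mk_eq_zero] at h'
  refine (twoPoly_monic t).not_dvd_of_natDegree_lt (by simp) ?_ h'
  rw [natDegree_C, twoPoly_natDegree]; positivity

lemma ζ_primitive : IsPrimitiveRoot (ζ t) (2 ^ (t + 1)) := by
  rw [IsPrimitiveRoot.iff_orderOf]
  apply orderOf_eq_prime_pow
  · rw [ζ_pow]
    intro h
    apply two_ne_zero' t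
    linear_combination -h
  · rw [pow_succ, pow_mul, ζ_pow]; norm_num

/-- Reduction modulo `1 - ζ`, which has residue field `ZMod 2`. -/
noncomputable def red : TwoCyc t →+* ZMod 2 :=
  AdjoinRoot.lift (Int.castRingHom (ZMod 2)) 1 (by simp [twoPoly]; decide)

lemma red_eq_zero_iff (r : TwoCyc t) : red t r = 0 ↔ 1 - ζ t ∣ r := by
  constructor
  · intro h
    obtain ⟨P, rfl⟩ := AdjoinRoot.mk_surjective r
    rw [red, AdjoinRoot.lift_mk, eval₂_at_one, eq_intCast, ZMod.intCast_zmod_eq_zero_iff_dvd] at h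
    obtain ⟨Q, hQ⟩ := X_sub_C_dvd_sub_C_eval (a := (1 : ℤ)) (p := P)
    obtain ⟨s, hs⟩ := h
    obtain ⟨q, hq⟩ := one_sub_dvd_one_sub_pow (ζ t) (2 ^ t)
    rw [ζ_pow] at hq
    have h1 := congrArg (AdjoinRoot.mk (twoPoly t)) hQ
    rw [hs] at h1
    simp only [map_sub, map_mul, AdjoinRoot.mk_X, AdjoinRoot.mk_C] at h1
    simp at h1
    refine ⟨q * (s : TwoCyc t) - AdjoinRoot.mk _ Q, ?_⟩
    linear_combination h1 + (s : TwoCyc t) * hq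
  · rintro ⟨c, rfl⟩
    simp [red]

lemma one_sub_ζ_prime : Prime (1 - ζ t) := by
  refine ⟨?_, ?_, ?_⟩
  · rw [sub_ne_zero]
    exact (ζ_primitive t).ne_one (Nat.one_lt_two_pow (by simp)) |>.symm
  · intro h
    have := h.map (red t)
    rw [(red_eq_zero_iff t _).2 dvd_rfl] at this
    exact not_isUnit_zero this
  · intro a b h
    simpa [← red_eq_zero_iff] using h

/-- The Frobenius congruence `(1 - X) ^ (2 ^ t) ≡ X ^ (2 ^ t) + 1` modulo `2`. -/
lemma exists_one_sub_pow : ∀ t : ℕ, ∃ W : ℤ[X], (1 - X) ^ (2 ^ t) = X ^ (2 ^ t) + 1 + 2 * W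
  | 0 => ⟨-X, by ring⟩
  | t + 1 => by
    obtain ⟨W, hW⟩ := exists_one_sub_pow t
    refine ⟨X ^ (2 ^ t) + 2 * (X ^ (2 ^ t) + 1) * W + 2 * W ^ 2, ?_⟩
    rw [pow_succ, pow_mul, hW, pow_mul]
    ring

/-- The prime `2` is totally ramified: `1 - ζ` has valuation `1` and `2` has valuation `2 ^ t`. -/
lemma exists_ramified : ∃ w : TwoCyc t, ¬ (1 - ζ t) ∣ w ∧ (1 - ζ t) ^ (2 ^ t) = 2 * w := by
  obtain ⟨W, hW⟩ := exists_one_sub_pow t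
  refine ⟨AdjoinRoot.mk _ W, ?_, ?_⟩
  · -- evaluating `(1 - X) ^ (2 ^ t) = X ^ (2 ^ t) + 1 + 2 W` at `1` gives `W(1) = -1`
    have h := congrArg (eval 1) hW
    simp at h
    have h1 : eval 1 W = -1 := by omega
    rw [← red_eq_zero_iff, red, AdjoinRoot.lift_mk, eval₂_at_one, h1]
    simp
  · have h := congrArg (AdjoinRoot.mk (twoPoly t)) hW
    simp only [map_pow, map_sub, map_add, map_mul, map_one, AdjoinRoot.mk_X, map_ofNat,
      ζ_pow] at h
    rw [h]; ring

/-- Complex conjugation `ζ ↦ ζ⁻¹`. -/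
noncomputable def conj : TwoCyc t →+* TwoCyc t :=
  AdjoinRoot.lift (Int.castRingHom _) (ζ t ^ (2 ^ (t + 1) - 1)) (by
    have h : (ζ t ^ (2 ^ (t + 1) - 1)) ^ (2 ^ t) = -1 := by
      have ho : Odd (2 ^ (t + 1) - 1) :=
        Nat.Even.sub_odd Nat.one_le_two_pow (by simp [Nat.even_pow]) odd_one
      rw [pow_right_comm, ζ_pow, ho.neg_one_pow]
    simp [twoPoly, h])

lemma conj_ζ_mul : conj t (ζ t) * ζ t = 1 := by
  rw [conj, AdjoinRoot.lift_root, ← pow_succ, Nat.sub_add_cancel Nat.one_le_two_pow]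
  exact (ζ_primitive t).pow_eq_one

lemma conj_unit (u : (TwoCyc t)ˣ) (hu : u ^ (2 ^ (t + 1)) = 1) :
    conj t u = ((u⁻¹ : (TwoCyc t)ˣ) : TwoCyc t) := by
  have hu' : (u : TwoCyc t) ^ (2 ^ (t + 1)) = 1 := by
    rw [← Units.val_pow_eq_pow_val, hu, Units.val_one]
  obtain ⟨i, -, hi⟩ := (ζ_primitive t).eq_pow_of_pow_eq_one hu'
  rw [← Units.mul_eq_one_iff_eq_inv, ← hi, map_pow, ← mul_pow, conj_ζ_mul, one_pow]

lemma pow_dvd_conj {s : ℕ} {b : TwoCyc t} (h : (1 - ζ t) ^ s ∣ b) : (1 - ζ t) ^ s ∣ conj t b := by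
  have h1 := map_dvd (conj t) h
  rw [map_pow] at h1
  refine (pow_dvd_pow_of_dvd ⟨-conj t (ζ t), ?_⟩ s).trans h1
  rw [map_sub, map_one]
  linear_combination -conj_ζ_mul t

/-- The power basis `1, ζ, …, ζ ^ (2 ^ t - 1)`. -/
noncomputable def pb : PowerBasis ℤ (TwoCyc t) := AdjoinRoot.powerBasis' (twoPoly_monic t)

lemma pb_dim : (pb t).dim = 2 ^ t := by
  rw [pb, AdjoinRoot.powerBasis'_dim, twoPoly_natDegree]

lemma pb_basis (j : Fin (pb t).dim) : (pb t).basis j = ζ t ^ (j : ℕ) := by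
  rw [PowerBasis.basis_eq_pow]; rfl

/-- A coordinate of a root of unity of order dividing `2 ^ (t + 1)` has absolute value at most `1`,
and is nonzero only for `± ζ ^ j`. -/
lemma abs_coord_le (j : Fin (pb t).dim) (u : TwoCyc t) (hu : u ^ (2 ^ (t + 1)) = 1)
    [DecidableEq (TwoCyc t)] :
    |(pb t).basis.coord j u| ≤
      (if u = ζ t ^ (j : ℕ) then 1 else 0) + (if u = -ζ t ^ (j : ℕ) then 1 else 0) := by
  obtain ⟨i, hi, rfl⟩ := (ζ_primitive t).eq_pow_of_pow_eq_one hu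
  have aux : ∀ i : Fin (pb t).dim, |(pb t).basis.coord j (ζ t ^ (i : ℕ))| =
      if ζ t ^ (i : ℕ) = ζ t ^ (j : ℕ) then 1 else 0 := by
    intro i
    rw [← pb_basis, ← pb_basis, Module.Basis.coord_apply, Module.Basis.repr_self,
      Finsupp.single_apply]
    simp only [(pb t).basis.injective.eq_iff]
    split_ifs <;> simp
  rcases lt_or_ge i (2 ^ t) with h | h
  · rw [← pb_dim] at h
    rw [aux ⟨i, h⟩]
    have : (0 : ℤ) ≤ if ζ t ^ i = -ζ t ^ (j : ℕ) then 1 else 0 := by split_ifs <;> simp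
    exact le_add_of_nonneg_right this
  · obtain ⟨i', rfl⟩ := Nat.exists_eq_add_of_le h
    have h' : i' < (pb t).dim := by rw [pb_dim]; rw [pow_succ] at hi; omega
    rw [pow_add, ζ_pow, neg_one_mul, map_neg, abs_neg, aux ⟨i', h'⟩]
    simp only [neg_inj]
    have : (0 : ℤ) ≤ if -ζ t ^ i' = ζ t ^ (j : ℕ) then 1 else 0 := by split_ifs <;> simp
    exact le_add_of_nonneg_left this

end TwoCyc

/-! ### Characters of maximal order -/

lemma card_fiber_le {G R : Type*} [Group G] [Fintype G] [CommRing R] [DecidableEq R]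
    (χ : G →* Rˣ) (z : R) : #{x : G | (χ x : R) = z} ≤ Nat.card χ.ker := by
  classical
  rcases Finset.eq_empty_or_nonempty {x : G | (χ x : R) = z} with h | ⟨y, hy⟩
  · rw [h]; simp
  · rw [Nat.card_eq_fintype_card, ← Fintype.card_coe]
    simp only [Finset.mem_filter, Finset.mem_univ, true_and] at hy
    refine Fintype.card_le_of_injective (fun x => ⟨x.1 * y⁻¹, ?_⟩) ?_
    · have hx := x.2
      simp only [Finset.mem_filter, Finset.mem_univ, true_and] at hx
      rw [MonoidHom.mem_ker, map_mul, map_inv, mul_inv_eq_one]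
      exact Units.ext (hx.trans hy.symm)
    · intro a b hab
      exact Subtype.ext (mul_right_cancel (congrArg Subtype.val hab))

/-- In a group of exponent `2 ^ (t + 1)` some character attains a value of order `2 ^ (t + 1)`, so
its kernel has index at least `2 ^ (t + 1)`. -/
lemma exists_character {G : Type*} [CommGroup G] [Finite G] (t : ℕ)
    (hexp : Monoid.exponent G = 2 ^ (t + 1)) :
    ∃ χ : G →* (TwoCyc t)ˣ, Nat.card χ.ker * 2 ^ (t + 1) ≤ Nat.card G := by
  have : NeZero (Monoid.exponent G) := ⟨by rw [hexp]; positivity⟩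
  have : HasEnoughRootsOfUnity (TwoCyc t) (Monoid.exponent G) :=
    ⟨⟨TwoCyc.ζ t, by rw [hexp]; exact TwoCyc.ζ_primitive t⟩, inferInstance⟩
  obtain ⟨e⟩ := CommGroup.monoidHom_mulEquiv_of_hasEnoughRootsOfUnity G (TwoCyc t)
  have hE := Monoid.exponent_eq_of_mulEquiv e
  rw [hexp] at hE
  obtain ⟨χ, hχ⟩ := Monoid.exists_orderOf_eq_exponent
    (Monoid.ExponentExists.of_finite (G := G →* (TwoCyc t)ˣ))
  rw [hE] at hχ
  have hne : χ ^ (2 ^ t) ≠ 1 :=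
    pow_ne_one_of_lt_orderOf (by positivity) (by rw [hχ]; exact Nat.pow_lt_pow_succ one_lt_two)
  obtain ⟨g, hg⟩ : ∃ g, χ g ^ (2 ^ t) ≠ 1 := by
    by_contra! hall
    exact hne (MonoidHom.ext fun g => by simpa using hall g)
  have hord : orderOf (χ g) = 2 ^ (t + 1) := by
    refine orderOf_eq_prime_pow hg ?_
    rw [← map_pow, ← hexp, Monoid.pow_exponent_eq_one, map_one]
  refine ⟨χ, ?_⟩
  rw [← Subgroup.card_mul_index χ.ker, Subgroup.index_ker]
  refine Nat.mul_le_mul_left _ ?_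
  have h1 : orderOf (⟨χ g, g, rfl⟩ : χ.range) = 2 ^ (t + 1) := by
    rw [← Subgroup.orderOf_coe, hord]
  rw [← h1]
  have : Finite χ.range := Finite.of_surjective _ χ.rangeRestrict_surjective
  exact Nat.le_of_dvd Nat.card_pos (orderOf_dvd_natCard _)

theorem turyn_exponent_bound {G : Type*} [CommGroup G] [Finite G] (d : ℕ) (hd : 1 ≤ d)
    (hG : Nat.card G = 2 ^ (2 * d + 2)) (h : IsHadamardGroup G) :
    Monoid.exponent G ≤ 2 ^ (d + 2) := by
  classical
  have := Fintype.ofFinite G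
  obtain ⟨D, hD⟩ := h
  obtain ⟨e, -, he⟩ := (Nat.dvd_prime_pow Nat.prime_two).1
    (hG ▸ Group.exponent_dvd_nat_card (G := G))
  rw [he]
  refine Nat.pow_le_pow_right two_pos ?_
  by_contra! hlt
  obtain ⟨t, rfl⟩ : ∃ t, e = t + 1 := ⟨e - 1, by omega⟩
  obtain ⟨χ, hker⟩ := exists_character t he
  have hχ : ∀ x, χ x ^ (2 ^ (t + 1)) = 1 := fun x => by
    rw [← map_pow, ← he, Monoid.pow_exponent_eq_one, map_one]
  set b : TwoCyc t := ∑ x, (signInd D x : TwoCyc t) * (χ x : TwoCyc t) with hb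
  set b' : TwoCyc t := ∑ x, (signInd D x : TwoCyc t) * ((χ x)⁻¹ : (TwoCyc t)ˣ) with hb'
  have hbb : b * b' = 2 ^ (2 * (d + 1)) := by
    rw [hb, hb', character_sum_mul hD, ← Nat.card_eq_fintype_card, hG]
    push_cast; ring
  have hconj : TwoCyc.conj t b' = b := by
    rw [hb, hb', map_sum]
    refine Finset.sum_congr rfl fun x _ => ?_
    rw [map_mul, map_intCast, TwoCyc.conj_unit t _ (by rw [inv_pow, hχ, inv_one]), inv_inv]
  obtain ⟨w, hw, h2⟩ := TwoCyc.exists_ramified t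
  obtain ⟨c, hc⟩ := two_pow_dvd_of_mul_eq (TwoCyc.one_sub_ζ_prime t) hw h2 hbb
    (fun s hs => hconj ▸ TwoCyc.pow_dvd_conj t hs)
  have hb0 : b = 0 := by
    apply (TwoCyc.pb t).basis.ext_elem
    intro j
    rw [map_zero, Finsupp.zero_apply, ← Module.Basis.coord_apply]
    set L := (TwoCyc.pb t).basis.coord j with hL
    have hdvd : (2 : ℤ) ^ (d + 1) ∣ L b := by
      refine ⟨L c, ?_⟩
      rw [hc, show (2 : TwoCyc t) ^ (d + 1) * c = ((2 : ℤ) ^ (d + 1)) • c by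
        rw [zsmul_eq_mul]; push_cast; rfl, map_smul, smul_eq_mul]
    have hbound : |L b| ≤ 2 * (Nat.card χ.ker : ℤ) := by
      calc |L b| = |∑ x, signInd D x * L (χ x)| := by
            rw [hb, map_sum]
            congr 1
            refine Finset.sum_congr rfl fun x _ => ?_
            rw [← zsmul_eq_mul, map_smul, smul_eq_mul]
        _ ≤ ∑ x, |signInd D x * L (χ x)| := Finset.abs_sum_le_sum_abs _ _
        _ ≤ ∑ x, ((if (χ x : TwoCyc t) = TwoCyc.ζ t ^ (j : ℕ) then 1 else 0) +
              (if (χ x : TwoCyc t) = -TwoCyc.ζ t ^ (j : ℕ) then 1 else 0)) := by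
            refine Finset.sum_le_sum fun x _ => ?_
            rw [abs_mul, abs_signInd, one_mul]
            exact TwoCyc.abs_coord_le t j _ (by
              rw [← Units.val_pow_eq_pow_val, hχ, Units.val_one])
        _ ≤ 2 * (Nat.card χ.ker : ℤ) := by
            rw [Finset.sum_add_distrib, Finset.sum_boole, Finset.sum_boole]
            have h1 := card_fiber_le χ (TwoCyc.ζ t ^ (j : ℕ))
            have h2 := card_fiber_le χ (-TwoCyc.ζ t ^ (j : ℕ))
            push_cast [← Int.ofNat_le] at h1 h2 ⊢
            omega
    refine Int.eq_zero_of_abs_lt_dvd hdvd (hbound.trans_lt ?_)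
    have hk : 2 * Nat.card χ.ker < 2 ^ (d + 1) := by
      have h3 : Nat.card χ.ker * 2 ^ (d + 3) ≤ 2 ^ (2 * d + 2) := by
        rw [← hG]
        exact le_trans (Nat.mul_le_mul_left _ (Nat.pow_le_pow_right two_pos hlt)) hker
      have h4 : (2 : ℕ) ^ (d + 3) = 8 * 2 ^ d := by ring
      have h5 : (2 : ℕ) ^ (2 * d + 2) = 4 * 2 ^ d * 2 ^ d := by ring
      have h6 : (2 : ℕ) ^ (d + 1) = 2 * 2 ^ d := by ring
      have h7 : 0 < (2 : ℕ) ^ d := by positivity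
      rw [h4, h5] at h3
      rw [h6]
      nlinarith
    exact_mod_cast hk
  rw [hb0, zero_mul] at hbb
  exact pow_ne_zero _ (TwoCyc.two_ne_zero' t) hbb.symm
end

section
/- Let d ≥ 1 and let G be a group of order 2^{2d+2} containing a normal subgroup K with |K| < 2^d such that the quotient group G/K is isomorphic to a dihedral group (DihedralGroup n for some n ≥ 1). Then G contains no Hadamard difference set. -/
open NumberField DihedralGroup

/-! ### Arithmetic of two-power cyclotomic integers -/

/-- If `2` is associated to a power of a prime `π` that is associated to its conjugate `σ π`, then an
element with `a * σ a = (2 ^ c) ^ 2` is associated to a power of `π`, hence to `σ a`, and comparing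
exponents of `π` shows that `2 ^ c` divides it. -/
theorem dvd_of_mul_conj {R : Type*} [CommRing R] [IsDomain R] {π : R} (hπ : Prime π)
    (σ : R →+* R) (hσ : Associated (σ π) π) {M : ℕ} (h2 : Associated (2 : R) (π ^ M))
    {c : ℕ} {a : R} (h : a * σ a = (2 ^ c) ^ 2) : (2 : R) ^ c ∣ a := by
  have h2c : Associated ((2 : R) ^ c) (π ^ (M * c)) := by
    rw [pow_mul]; exact h2.pow_pow
  have hdvd : a ∣ π ^ (M * c * 2) := by
    rw [pow_mul]
    exact (Dvd.intro _ h).trans h2c.pow_pow.dvd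
  obtain ⟨e, -, he⟩ := (dvd_prime_pow hπ _).1 hdvd
  have hσa : Associated (σ a) (π ^ e) := by
    refine (he.map σ).trans ?_
    rw [map_pow]
    exact hσ.pow_pow
  have h4 : Associated (π ^ (e + e)) (π ^ (M * c * 2)) := by
    rw [pow_add, pow_mul π (M * c) 2]
    exact (he.mul_mul hσa).symm.trans (h ▸ h2c.pow_pow)
  have h5 : e + e = M * c * 2 :=
    le_antisymm ((pow_dvd_pow_iff hπ.ne_zero hπ.not_isUnit).1 h4.dvd)
      ((pow_dvd_pow_iff hπ.ne_zero hπ.not_isUnit).1 h4.symm.dvd)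
  obtain rfl : e = M * c := by omega
  exact (h2c.trans he.symm).dvd

/-- The ring is `𝓞 K`, with `σ` induced by the automorphism `ζ ↦ ζ⁻¹` of `K`; the last clause
compares coordinates in the integral power basis. -/
theorem exists_cyclotomic_ring_aux (t : ℕ) (K : Type) [Field K] [NumberField K]
    [IsCyclotomicExtension {2 ^ (t + 1)} ℚ K] :
    ∃ (R : Type) (_ : CommRing R) (_ : IsDomain R) (_ : CharZero R) (ζ : R) (σ : R →+* R),
      ζ ^ 2 ^ t = -1 ∧ ζ * σ ζ = 1 ∧
      (∀ (c : ℕ) (a : R), a * σ a = (2 ^ c) ^ 2 → 2 ^ c ∣ a) ∧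
      (∀ (c : ℤ) (a : Fin (2 ^ t) → ℤ), (c : R) ∣ ∑ i, (a i : R) * ζ ^ (i : ℕ) →
        ∀ i, c ∣ a i) := by
  have hζ : IsPrimitiveRoot (IsCyclotomicExtension.zeta (2 ^ (t + 1)) ℚ K) (2 ^ (t + 1)) :=
    IsCyclotomicExtension.zeta_spec _ _ _
  have : Fact (Nat.Prime 2) := ⟨Nat.prime_two⟩
  set z := hζ.toInteger with hz
  have hz1 : IsPrimitiveRoot z (2 ^ (t + 1)) := hζ.toInteger_isPrimitiveRoot
  let s : K ≃ₐ[ℚ] K := IsCyclotomicExtension.fromZetaAut hζ.inv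
    (Polynomial.cyclotomic.irreducible_rat (by positivity))
  have hs : s (IsCyclotomicExtension.zeta (2 ^ (t + 1)) ℚ K) =
      (IsCyclotomicExtension.zeta (2 ^ (t + 1)) ℚ K)⁻¹ := IsCyclotomicExtension.fromZetaAut_spec _ _
  let σ : 𝓞 K →+* 𝓞 K := RingOfIntegers.mapRingHom (s : K →+* K)
  have hzσ : z * σ z = 1 := by
    apply RingOfIntegers.coe_injective
    change (IsCyclotomicExtension.zeta (2 ^ (t + 1)) ℚ K) *
      s (IsCyclotomicExtension.zeta (2 ^ (t + 1)) ℚ K) = 1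
    rw [hs, mul_inv_cancel₀ (hζ.ne_zero (by positivity))]
  have hassoc : Associated (σ (z - 1)) (z - 1) := by
    have h1 : σ (z - 1) * (-z) = z - 1 := by
      rw [map_sub, map_one]; linear_combination -hzσ
    exact ⟨-(hz1.isUnit (by positivity)).unit, by simpa using h1⟩
  have h2 : ∃ M, Associated (2 : 𝓞 K) ((z - 1) ^ M) := by
    refine ⟨Module.finrank ℚ K, ?_⟩
    have h := IsCyclotomicExtension.Rat.map_eq_span_zeta_sub_one_pow 2 t hζ
    rw [Ideal.map_span, Set.image_singleton, Ideal.span_singleton_pow,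
      Ideal.span_singleton_eq_span_singleton] at h
    simpa using h
  obtain ⟨M, hM⟩ := h2
  refine ⟨𝓞 K, inferInstance, inferInstance, inferInstance, z, σ, ?_, hzσ, ?_, ?_⟩
  · have h1 : (z ^ 2 ^ t) ^ 2 = 1 := by rw [← pow_mul, ← pow_succ]; exact hz1.pow_eq_one
    rcases mul_self_eq_one_iff.1 ((sq _).symm.trans h1) with h | h
    · exact absurd h (hz1.pow_ne_one_of_pos_of_lt (by positivity)
        (Nat.pow_lt_pow_right (by norm_num) (by omega)))
    · exact h
  · intro c a h
    exact dvd_of_mul_conj hζ.zeta_sub_one_prime σ hassoc hM h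
  · rintro c a ⟨b, hb⟩ i
    have hdim : hζ.integralPowerBasis.dim = 2 ^ t := by
      rw [hζ.integralPowerBasis_dim, Nat.totient_prime_pow Nat.prime_two (by omega)]; simp
    let B := hζ.integralPowerBasis.basis.reindex (finCongr hdim)
    have hB : ∀ j, B j = z ^ (j : ℕ) := by
      intro j; simp [B, hz]
    have h3 := congrArg (fun x => B.repr x i) hb
    have h4 : ∑ i, (a i : 𝓞 K) * z ^ (i : ℕ) = ∑ i, a i • B i := by simp [hB]
    rw [h4] at h3
    have h5 : (c : 𝓞 K) * b = c • b := by simp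
    simp only [h5, B.repr_sum_self, map_smul] at h3
    exact ⟨_, h3⟩

/-- The facts about `R = ℤ[ζ]`, with `ζ` a primitive `2 ^ (t + 1)`-th root of unity and `σ` complex
conjugation, that the argument uses: an element of squared modulus `(2 ^ c) ^ 2` is divisible by
`2 ^ c`, and divisibility by an integer is visible on coefficients in the basis `ζ ^ i`, `i < 2 ^ t`. -/
theorem exists_cyclotomic_ring (t : ℕ) :
    ∃ (R : Type) (_ : CommRing R) (_ : IsDomain R) (_ : CharZero R) (ζ : R) (σ : R →+* R),
      ζ ^ 2 ^ t = -1 ∧ ζ * σ ζ = 1 ∧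
      (∀ (c : ℕ) (a : R), a * σ a = (2 ^ c) ^ 2 → 2 ^ c ∣ a) ∧
      (∀ (c : ℤ) (a : Fin (2 ^ t) → ℤ), (c : R) ∣ ∑ i, (a i : R) * ζ ^ (i : ℕ) →
        ∀ i, c ∣ a i) := by
  refine @exists_cyclotomic_ring_aux t (CyclotomicField (2 ^ (t + 1)) ℚ) _ inferInstance ?_
  -- `convert` reconciles the canonical `ℚ`-algebra structure with that of the splitting field.
  convert CyclotomicField.isCyclotomicExtension (2 ^ (t + 1)) ℚ
  · rfl
  · exact Subsingleton.elim _ _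

/-! ### Sign functions of difference sets -/

/-- The function `1 - 2 * 1_D` has vanishing nontrivial autocorrelations: the sum at `t ≠ 1` equals
`v - 4 k + 4 l = 0`. -/
theorem exists_sign_function {G : Type*} [Group G] [Fintype G] {D : Set G}
    (hD : IsHadamardDiffSet D) :
    ∃ f : G → ℤ, (∀ g, |f g| = 1) ∧
      ∀ t, t ≠ 1 → ∑ h, f (t * h) * f h = 0 := by
  classical
  obtain ⟨k, l, hk, hl, hv⟩ := hD
  let e : G → ℤ := fun g => if g ∈ D then 1 else 0
  have he : ∑ h, e h = k := by
    rw [← hk, Nat.card_eq_fintype_card, Fintype.card_subtype]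
    simp [e]
  refine ⟨fun g => 1 - 2 * e g, fun g => ?_, fun t ht => ?_⟩
  · by_cases h : g ∈ D <;> simp [e, h]
  have h1 : ∑ h, e (t * h) = k := by
    rw [← he]; exact Equiv.sum_comp (Equiv.mulLeft t) e
  have h2 : ∑ h, e (t * h) * e h = l := by
    rw [← hl t ht]
    let E : {p : D × D // (p.1 : G) * (p.2 : G)⁻¹ = t} ≃ {h : G // t * h ∈ D ∧ h ∈ D} :=
      { toFun := fun p => ⟨p.1.2, (mul_inv_eq_iff_eq_mul.1 p.2) ▸ p.1.1.2, p.1.2.2⟩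
        invFun := fun h => ⟨(⟨t * h.1, h.2.1⟩, ⟨h.1, h.2.2⟩), by simp⟩
        left_inv := by
          rintro ⟨⟨⟨x, hx⟩, ⟨y, hy⟩⟩, h⟩
          simp only at h
          simp [← h]
        right_inv := fun h => rfl }
    rw [Nat.card_congr E, Nat.card_eq_fintype_card, Fintype.card_subtype, Finset.natCast_card_filter]
    refine Finset.sum_congr rfl fun h _ => ?_
    by_cases h3 : t * h ∈ D <;> by_cases h4 : h ∈ D <;> simp [e, h3, h4]
  have h3 : ∑ h, (1 - 2 * e (t * h)) * (1 - 2 * e h) =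
      Nat.card G - 2 * ∑ h, e (t * h) - 2 * ∑ h, e h + 4 * ∑ h, e (t * h) * e h := by
    simp only [Finset.mul_sum, Nat.card_eq_fintype_card, ← Finset.card_univ (α := G), 
      Finset.cast_card, ← Finset.sum_sub_distrib, ← Finset.sum_add_distrib]
    exact Finset.sum_congr rfl fun _ _ => by ring
  rw [h3, he, h1, h2]
  have : (Nat.card G : ℤ) + 4 * l = 4 * k := by exact_mod_cast hv
  linarith

/-- Expanding the product and collecting the terms with `g * h⁻¹ = t` gives the autocorrelation of `f`
at `t`, which is `|G|` at `t = 1` and zero elsewhere. -/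
theorem sum_mul_sum_inv_s3 {G S : Type*} [Group G] [Fintype G] [Ring S] (ρ : G →* S) (f : G → ℤ)
    (hf1 : ∀ g, |f g| = 1) (hf : ∀ t, t ≠ 1 → ∑ h, f (t * h) * f h = 0) :
    (∑ g, (f g : S) * ρ g) * (∑ g, (f g : S) * ρ g⁻¹) = (Nat.card G : S) := by
  classical
  have h1 : ∑ h, f (1 * h) * f h = Nat.card G := by
    have : ∀ h, f (1 * h) * f h = 1 := fun h => by
      rw [one_mul, ← abs_mul_abs_self, hf1]; rfl
    rw [Finset.sum_congr rfl fun h _ => this h]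
    simp
  calc (∑ g, (f g : S) * ρ g) * (∑ g, (f g : S) * ρ g⁻¹)
      = ∑ h, ∑ g, (f g * f h : ℤ) * ρ (g * h⁻¹) := by
        rw [Finset.sum_mul_sum, Finset.sum_comm]
        refine Finset.sum_congr rfl fun h _ => Finset.sum_congr rfl fun g _ => ?_
        rw [map_mul, Int.cast_mul, mul_assoc, mul_assoc, ← mul_assoc (ρ g),
          ← mul_assoc (f h : S), (Int.cast_commute (f h) (ρ g)).eq]
    _ = ∑ h, ∑ t, (f (t * h) * f h : ℤ) * ρ t := by
        refine Finset.sum_congr rfl fun h _ => ?_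
        rw [← Equiv.sum_comp (Equiv.mulRight h)]
        simp
    _ = ∑ t, ((∑ h, f (t * h) * f h : ℤ) : S) * ρ t := by
        rw [Finset.sum_comm]
        simp only [Int.cast_sum, Finset.sum_mul]
    _ = Nat.card G := by
        rw [Finset.sum_eq_single 1]
        · rw [h1]; simp
        · intro t _ ht; rw [hf t ht]; simp
        · simp

/-! ### Dihedral quotients -/

/-- Since `ζ ^ 2 ^ t = -1`, the coefficients of the sum in the basis `ζ ^ j`, `j < 2 ^ t`, are
differences of two values of `A`, too small to be nonzero multiples of `2 ^ c`. -/
theorem eq_zero_of_two_pow_dvd {R : Type*} [CommRing R] {t c k : ℕ} {ζ : R}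
    (hζ : ζ ^ 2 ^ t = -1)
    (hcoef : ∀ (c : ℤ) (a : Fin (2 ^ t) → ℤ), (c : R) ∣ ∑ i, (a i : R) * ζ ^ (i : ℕ) →
        ∀ i, c ∣ a i)
    (A : ZMod (2 ^ (t + 1)) → ℤ) (hA : ∀ i, |A i| ≤ k) (hk : 2 * k < 2 ^ c)
    (hdvd : (2 : R) ^ c ∣ ∑ i, (A i : R) * ζ ^ i.val) :
    ∑ i, (A i : R) * ζ ^ i.val = 0 := by
  have h1 : ∑ i, (A i : R) * ζ ^ i.val =
      ∑ j : Fin (2 ^ t), ((A (j : ℕ) - A ((2 ^ t + j : ℕ)) : ℤ) : R) * ζ ^ (j : ℕ) := by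
    have h2 : ∑ i, (A i : R) * ζ ^ i.val =
        ∑ j ∈ Finset.range (2 ^ (t + 1)), (A (j : ℕ) : R) * ζ ^ j := by
      symm
      refine Finset.sum_bij' (fun j _ => (j : ZMod (2 ^ (t + 1)))) (fun i _ => i.val) ?_ ?_ ?_ ?_ ?_
      · simp
      · intro i _; simpa using ZMod.val_lt i
      · intro j hj; exact ZMod.val_cast_of_lt (by simpa using hj)
      · intro i _; simp
      · intro j hj
        rw [ZMod.val_cast_of_lt (by simpa using hj)]
    rw [h2, show Finset.range (2 ^ (t + 1)) = Finset.range (2 ^ t + 2 ^ t) by ring_nf,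
      Finset.sum_range_add, ← Finset.sum_add_distrib,
      ← Fin.sum_univ_eq_sum_range
        (fun j => (A (j : ℕ) : R) * ζ ^ j + (A ((2 ^ t + j : ℕ)) : R) * ζ ^ (2 ^ t + j))]
    refine Finset.sum_congr rfl fun j _ => ?_
    rw [pow_add ζ, hζ]; push_cast; ring
  rw [h1] at hdvd ⊢
  have h3 := hcoef (2 ^ c) _ (by exact_mod_cast hdvd)
  refine Finset.sum_eq_zero fun j _ => ?_
  rw [Int.eq_zero_of_abs_lt_dvd (h3 j) ?_]
  · simp
  · have h4 := abs_sub (A (j : ℕ)) (A ((2 ^ t + j : ℕ)))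
    have h5 : (2 * k : ℤ) < 2 ^ c := by exact_mod_cast hk
    linarith [hA (j : ℕ), hA ((2 ^ t + j : ℕ))]

/-- The two-dimensional representation of the dihedral group induced from a character `χ`
of the rotation subgroup, in the basis where rotations are diagonal. -/
def dihedralRep {n : ℕ} {R : Type*} [CommRing R] (χ : AddChar (ZMod n) R) :
    DihedralGroup n →* Matrix (Fin 2) (Fin 2) R where
  toFun
    | r i => !![χ i, 0; 0, χ (-i)]
    | sr i => !![0, χ (-i); χ i, 0]
  map_one' := by
    rw [one_def]; simp [Matrix.one_fin_two]
  map_mul' := by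
    rintro (i | i) (j | j) <;>
      simp [← AddChar.map_add_eq_mul, sub_eq_add_neg, add_comm]

theorem dihedral_sum {n : ℕ} [NeZero n] {M : Type*} [AddCommMonoid M]
    (F : DihedralGroup n → M) : ∑ x, F x = ∑ i, F (r i) + ∑ i, F (sr i) := by
  rw [← equivSum.symm.sum_comp, Fintype.sum_sum_type]
  rfl

/-- The group-theoretic core: the hypotheses on `R`, `ζ`, `σ` are those provided by
`exists_cyclotomic_ring`, and `hf` is the identity of `sum_mul_sum_inv`. -/
theorem no_dihedral_image {G : Type*} [Group G] [Fintype G] {t d k : ℕ}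
    (hG : Nat.card G = 2 ^ (2 * d + 2)) (φ : G →* DihedralGroup (2 ^ (t + 1)))
    (f : G → ℤ)
    (hk : ∀ x, |∑ g with φ g = x, f g| ≤ (k : ℤ)) (hkd : k < 2 ^ d)
    {R : Type} [CommRing R] [IsDomain R] [CharZero R] {ζ : R} {σ : R →+* R}
    (hζ : ζ ^ 2 ^ t = -1) (hζσ : ζ * σ ζ = 1)
    (hconj : ∀ (c : ℕ) (a : R), a * σ a = (2 ^ c) ^ 2 → 2 ^ c ∣ a)
    (hcoef : ∀ (c : ℤ) (a : Fin (2 ^ t) → ℤ), (c : R) ∣ ∑ i, (a i : R) * ζ ^ (i : ℕ) →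
        ∀ i, c ∣ a i)
    (hf : ∀ ρ : G →* Matrix (Fin 2) (Fin 2) R,
      (∑ g, (f g : Matrix (Fin 2) (Fin 2) R) * ρ g) *
        (∑ g, (f g : Matrix (Fin 2) (Fin 2) R) * ρ g⁻¹) = (Nat.card G : Matrix (Fin 2) (Fin 2) R)) :
    False := by
  have hζn : ζ ^ 2 ^ (t + 1) = 1 := by rw [pow_succ, pow_mul, hζ]; norm_num
  let χ : AddChar (ZMod (2 ^ (t + 1))) R := AddChar.zmodChar _ hζn
  have hχ : ∀ i, χ i = ζ ^ i.val := fun i => rfl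
  have hχσ : ∀ i, σ (χ i) = χ (-i) := fun i => by
    have h1 : χ i * σ (χ i) = 1 := by rw [hχ, map_pow, ← mul_pow, hζσ, one_pow]
    have h2 : χ i * χ (-i) = 1 := by
      rw [← AddChar.map_add_eq_mul, add_neg_cancel, AddChar.map_zero_eq_one]
    exact mul_left_cancel₀ (left_ne_zero_of_mul_eq_one h1) (h1.trans h2.symm)
  let F : DihedralGroup (2 ^ (t + 1)) → ℤ := fun x => ∑ g with φ g = x, f g
  let a : R := ∑ i, (F (r i) : R) * χ i
  let b : R := ∑ i, (F (sr i) : R) * χ i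
  have ha : σ a = ∑ i, (F (r i) : R) * χ (-i) := by simp [a, hχσ]
  have hb : σ b = ∑ i, (F (sr i) : R) * χ (-i) := by simp [b, hχσ]
  -- Sums over `G` of functions that factor through `φ` become sums of `F` over the dihedral group.
  have push : ∀ ρ : DihedralGroup (2 ^ (t + 1)) → Matrix (Fin 2) (Fin 2) R,
      ∑ g, (f g : Matrix (Fin 2) (Fin 2) R) * ρ (φ g) =
        ∑ i, (F (r i)) • ρ (r i) + ∑ i, (F (sr i)) • ρ (sr i) := fun ρ => by
    rw [← dihedral_sum (fun x => F x • ρ x), ← Finset.sum_fiberwise _ φ]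
    refine Finset.sum_congr rfl fun x _ => ?_
    rw [Finset.sum_smul]
    refine Finset.sum_congr rfl fun g hg => ?_
    rw [(Finset.mem_filter.1 hg).2, zsmul_eq_mul]
  have hM1 : ∑ g, (f g : Matrix (Fin 2) (Fin 2) R) * ((dihedralRep χ).comp φ) g =
      !![a, σ b; b, σ a] := by
    refine (push (dihedralRep χ)).trans ?_
    ext i j
    fin_cases i <;> fin_cases j <;>
      simp [dihedralRep, Matrix.add_apply, Matrix.sum_apply, ha, hb, a, b]
  have hM2 : ∑ g, (f g : Matrix (Fin 2) (Fin 2) R) * ((dihedralRep χ).comp φ) g⁻¹ =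
      !![σ a, σ b; b, a] := by
    simp only [MonoidHom.comp_apply, map_inv φ]
    refine (push (fun x => dihedralRep χ x⁻¹)).trans ?_
    ext i j
    fin_cases i <;> fin_cases j <;>
      simp [dihedralRep, Matrix.add_apply, Matrix.sum_apply, ha, hb, a, b]
  have hprod := hf ((dihedralRep χ).comp φ)
  rw [hM1, hM2, Matrix.mul_fin_two, hG] at hprod
  have h00 : a * σ a + σ b * b = (2 ^ (d + 1)) ^ 2 := by
    have := congrFun (congrFun hprod 0) 0
    simpa [← Nat.cast_pow, Matrix.natCast_apply, ← pow_mul, add_mul, mul_comm d 2] using this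
  have h01 : a * σ b = 0 := by
    have := congrFun (congrFun hprod 0) 1
    have h2 : a * σ b + σ b * a = 0 := by simpa [← Nat.cast_pow, Matrix.natCast_apply] using this
    have h3 : 2 * (a * σ b) = 0 := by linear_combination h2
    simpa using h3
  have hne : ((2 : R) ^ (d + 1)) ^ 2 ≠ 0 := by simp
  have hkd' : 2 * k < 2 ^ (d + 1) := by rw [pow_succ]; omega
  rcases mul_eq_zero.1 h01 with h | h
  · have h4 : b * σ b = (2 ^ (d + 1)) ^ 2 := by rw [← h00, h]; ring
    have h5 : b = 0 := eq_zero_of_two_pow_dvd hζ hcoef (fun i => F (sr i)) (fun i => hk _) hkd'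
      (hconj _ _ h4)
    exact hne (by rw [← h4, h5, zero_mul])
  · have h4 : a * σ a = (2 ^ (d + 1)) ^ 2 := by rw [← h00, h]; ring
    have h5 : a = 0 := eq_zero_of_two_pow_dvd hζ hcoef (fun i => F (r i)) (fun i => hk _) hkd'
      (hconj _ _ h4)
    exact hne (by rw [← h4, h5, zero_mul])

/-- A fiber of `φ` is empty or in bijection with the kernel. -/
theorem abs_sum_fiber_le {G H : Type*} [Group G] [Fintype G] [Group H] [DecidableEq H]
    (φ : G →* H) (f : G → ℤ) (hf : ∀ g, |f g| = 1) (x : H) :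
    |∑ g with φ g = x, f g| ≤ (Nat.card φ.ker : ℤ) := by
  classical
  refine (Finset.abs_sum_le_sum_abs _ _).trans ?_
  simp only [hf, Finset.sum_const, nsmul_eq_mul, mul_one, Nat.cast_le]
  by_cases hx : ∃ g₀, φ g₀ = x
  · obtain ⟨g₀, rfl⟩ := hx
    rw [← Fintype.card_subtype, ← Nat.card_eq_fintype_card]
    refine Nat.card_le_card_of_injective
      (fun g : {g // φ g = φ g₀} => (⟨g₀⁻¹ * g.1, by simp [MonoidHom.mem_ker, g.2]⟩ : φ.ker)) ?_
    intro g h hgh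
    exact Subtype.ext (mul_left_cancel (congrArg Subtype.val hgh))
  · rw [Finset.filter_false_of_mem fun g _ hg => hx ⟨g, hg⟩]
    simp

theorem dillon_nonexistence {G : Type*} [Group G] [Finite G] (d : ℕ) (hd : 1 ≤ d)
    (hG : Nat.card G = 2 ^ (2 * d + 2)) (K : Subgroup G) [K.Normal]
    (hK : Nat.card K < 2 ^ d)
    (hdih : ∃ n : ℕ, 1 ≤ n ∧ Nonempty ((G ⧸ K) ≃* DihedralGroup n)) :
    ¬ IsHadamardGroup G := by
  rintro ⟨D, hD⟩
  obtain ⟨n, -, ⟨e⟩⟩ := hdih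
  have := Fintype.ofFinite G
  have hcard : 2 * n * Nat.card K = 2 ^ (2 * d + 2) := by
    rw [← hG, Subgroup.card_eq_card_quotient_mul_card_subgroup K, Nat.card_congr e.toEquiv,
      DihedralGroup.nat_card]
  obtain ⟨m, -, rfl⟩ := (Nat.dvd_prime_pow Nat.prime_two).1
    (Dvd.intro (2 * Nat.card K) (by rw [← hcard]; ring) : n ∣ 2 ^ (2 * d + 2))
  have hm : m ≠ 0 := by
    rintro rfl
    have h1 : 2 ^ d < 2 ^ (2 * d + 1) := Nat.pow_lt_pow_right (by norm_num) (by omega)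
    rw [pow_succ] at hcard
    omega
  obtain ⟨t, rfl⟩ := Nat.exists_eq_succ_of_ne_zero hm
  obtain ⟨f, hf1, hf⟩ := exists_sign_function hD
  obtain ⟨R, _, _, _, ζ, σ, hζ, hζσ, hconj, hcoef⟩ := exists_cyclotomic_ring t
  let φ : G →* DihedralGroup (2 ^ (t + 1)) := (e : G ⧸ K →* _).comp (QuotientGroup.mk' K)
  have hφ : φ.ker = K := by
    ext g; simp [φ]
  exact no_dihedral_image hG φ f (fun x => hφ ▸ abs_sum_fiber_le φ f hf1 x) hK hζ hζσ hconj hcoef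
    fun ρ => sum_mul_sum_inv_s3 ρ f hf1 hf
end

section
/- Let p be a prime, let H be a finite p-group, let S be a finite set with |S| = |H|, and let φ : H → Perm(S) be a group homomorphism (an action of H on S). Suppose there exists s₀ ∈ S with φ(h)(s₀) = s₀ for all h ∈ H. Then there exists a bijection θ : S → H such that the map s ↦ φ(θ(s))(s) is a bijection from S to S. -/
/-!
The proof has two ingredients.

The first is a theorem of Drisko on rainbow matchings (`exists_rainbow_perm`): among `2m - 1`
permutations of an `m`-element set `O`, one can choose pairwise distinct ones `π_s`, one for each
`s ∈ O`, such that `s ↦ π_s(s)` is again a permutation of `O`. It follows by augmenting partial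
choices (`exists_augment`): a partial choice of size `k < m` leaves at least `k + 1` permutations
unused, and each unused permutation either yields a larger partial choice outright or enlarges, by
at least one element, the set of points that can be freed by exchanges along alternating paths.
As this set already contains an unmatched point, `k + 1` permutations suffice.

The second is a greedy assignment (`exists_greedy`). All orbits have `p`-power size, so, going
through the orbits in decreasing order of size and leaving the fixed point `s₀` for last, the
number of points still to be treated is always a multiple of the size `m` of the current orbit, and
it exceeds `m` because `s₀` is also left. Hence at least `2m` group elements are still available,
and Drisko's theorem serves the current orbit with `m` of them.
-/

open Finset

/-- A partial rainbow matching: `θ` assigns to the points `s` of `A` pairwise distinct indices in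
`X` such that the images `π (θ s) s` are pairwise distinct. Values of `θ` off `A` are irrelevant. -/
structure IsRainbow {S ι : Type*} (π : ι → S → S) (X : Finset ι) (A : Finset S) (θ : S → ι) :
    Prop where
  mapsTo : ∀ s ∈ A, θ s ∈ X
  inj : Set.InjOn θ A
  inj_image : Set.InjOn (fun s => π (θ s) s) A

/-- A rainbow matching of `A ⊂ O` that is not full can be enlarged by one point. The proof grows a
set `R` of points that can be left unmatched by a rainbow matching of the same size with the same
image `B`, obtained from the original one by changes inside `R` only; `J` is the set of new
indices used for this. -/
lemma exists_augment {S ι : Type*} [DecidableEq S] [DecidableEq ι] (π : ι → S → S)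
    (O : Finset S) (hinj : ∀ i, Set.InjOn (π i) O)
    (X : Finset ι) (hX : 2 * #O ≤ #X + 1) (A : Finset S) (hAO : A ⊆ O) (hA : #A < #O)
    (θ : S → ι) (h : IsRainbow π X A θ) :
    ∃ A' θ', A' ⊆ O ∧ #A' = #A + 1 ∧ IsRainbow π X A' θ' := by
  by_contra hno
  set B := A.image (fun s => π (θ s) s) with hB
  set C := A.image θ with hC
  have hBcard : #B = #A := card_image_iff.2 h.inj_image
  have hCcard : #C = #A := card_image_iff.2 h.inj
  have key : ∀ i, i ≤ #A + 1 → ∃ (R : Finset S) (J : Finset ι), R ⊆ O ∧ O \ A ⊆ R ∧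
      J ⊆ X \ C ∧ #J = i ∧ #R = #O - #A + i ∧ ∀ a ∈ R, ∃ (A' : Finset S) (θ' : S → ι),
        A' ⊆ O ∧ a ∉ A' ∧ #A' = #A ∧ (∀ s ∈ A', θ' s ∈ C ∪ J) ∧ Set.InjOn θ' A' ∧
        A'.image (fun s => π (θ' s) s) = B ∧ ∀ x ∈ O, x ∉ R → x ∈ A' ∧ θ' x = θ x := by
    intro i
    induction i with
    | zero =>
      intro _
      refine ⟨O \ A, ∅, sdiff_subset, subset_rfl, empty_subset _, rfl, ?_, ?_⟩
      · rw [card_sdiff_of_subset hAO]; rfl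
      · intro a ha
        refine ⟨A, θ, hAO, (mem_sdiff.1 ha).2, rfl, ?_, h.inj, rfl, ?_⟩
        · intro s hs
          simp only [union_empty]
          exact mem_image_of_mem _ hs
        · intro x hx hxR
          simp only [mem_sdiff, not_and, not_not] at hxR
          exact ⟨hxR hx, rfl⟩
    | succ i ih =>
      intro hi
      obtain ⟨R, J, hRO, hAR, hJ, hJi, hR, hM⟩ := ih (by omega)
      have hXC : #X - #A ≤ #(X \ C) := by
        rw [← hCcard]; exact le_card_sdiff _ _
      obtain ⟨j, hj, hjJ⟩ : ∃ j ∈ X \ C, j ∉ J := exists_mem_notMem_of_card_lt_card (by omega)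
      have hjX := (mem_sdiff.1 hj).1
      have hjC := (mem_sdiff.1 hj).2
      -- An edge of colour `j` from `R` to a point outside `B` would give a larger matching.
      have hRB : ∀ a ∈ R, π j a ∈ B := by
        intro a ha
        by_contra hb
        obtain ⟨A', θ', hA'O, haA', hA'c, hθ', hθ'i, hθ'B, -⟩ := hM a ha
        have hi' : Set.InjOn (fun s => π (θ' s) s) A' := by
          rw [← card_image_iff, hθ'B, hBcard, hA'c]
        refine hno ⟨insert a A', Function.update θ' a j,
          insert_subset (hRO ha) hA'O, by rw [card_insert_of_notMem haA', hA'c], ?_⟩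
        have hne : ∀ s ∈ A', Function.update θ' a j s = θ' s := fun s hs =>
          Function.update_of_ne (ne_of_mem_of_not_mem hs haA') _ _
        refine ⟨?_, ?_, ?_⟩
        · intro s hs
          rcases mem_insert.1 hs with rfl | hs
          · simpa using hjX
          · rw [hne s hs]
            rcases mem_union.1 (hθ' s hs) with hc | hc
            · obtain ⟨t, ht, hts⟩ := mem_image.1 hc
              exact hts ▸ h.mapsTo t ht
            · exact (mem_sdiff.1 (hJ hc)).1
        · rw [coe_insert, Set.injOn_insert (mt mem_coe.1 haA')]
          refine ⟨(Set.EqOn.injOn_iff (fun s hs => hne s hs)).2 hθ'i, ?_⟩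
          rintro ⟨s, hs, hs'⟩
          rw [hne s hs, Function.update_self] at hs'
          have := hθ' s hs
          rw [hs', mem_union] at this
          tauto
        · rw [coe_insert, Set.injOn_insert (mt mem_coe.1 haA')]
          refine ⟨(Set.EqOn.injOn_iff (fun s hs => by simp only [hne s hs])).2 hi', ?_⟩
          rintro ⟨s, hs, hs'⟩
          simp only [hne s hs, Function.update_self] at hs'
          apply hb
          rw [← hθ'B, ← hs']
          exact mem_image_of_mem (fun s => π (θ' s) s) hs
      -- `R` has more points than `R ∩ A`, so some edge of colour `j` leads to the partner of a
      -- point `c ∉ R`.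
      have hlt : #((R ∩ A).image (fun s => π (θ s) s)) < #(R.image (π j)) := by
        rw [card_image_iff.2 ((hinj j).mono (coe_subset.2 hRO))]
        refine lt_of_le_of_lt card_image_le (card_lt_card ?_)
        refine ⟨inter_subset_left, fun hsub => ?_⟩
        obtain ⟨u, hu, huA⟩ := exists_mem_notMem_of_card_lt_card hA
        exact huA (mem_inter.1 (hsub (hAR (mem_sdiff.2 ⟨hu, huA⟩)))).2
      obtain ⟨b, hb, hbn⟩ := exists_mem_notMem_of_card_lt_card hlt
      obtain ⟨a, ha, rfl⟩ := mem_image.1 hb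
      obtain ⟨c, hcA, hcb⟩ := mem_image.1 (hRB a ha)
      have hcR : c ∉ R := fun hc =>
        hbn (mem_image.2 ⟨c, mem_inter.2 ⟨hc, hcA⟩, hcb⟩)
      have hcO := hAO hcA
      refine ⟨insert c R, insert j J, insert_subset hcO hRO, hAR.trans (subset_insert _ _),
        insert_subset hj hJ, by rw [card_insert_of_notMem hjJ, hJi],
        by rw [card_insert_of_notMem hcR, hR]; rfl, ?_⟩
      intro a' ha'
      rcases mem_insert.1 ha' with rfl | ha'
      · obtain ⟨A', θ', hA'O, haA', hA'c, hθ', hθ'i, hθ'B, hag⟩ := hM a ha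
        obtain ⟨hcA', hcθ⟩ := hag a' hcO hcR
        -- Exchange the edge at the point `c` (now called `a'`) for the edge of colour `j` at `a`,
        -- which has the same target.
        have hac : a ≠ a' := fun e => hcR (e ▸ ha)
        have hne : ∀ s ∈ A', Function.update θ' a j s = θ' s := fun s hs =>
          Function.update_of_ne (ne_of_mem_of_not_mem hs haA') _ _
        have haE : a ∉ A'.erase a' := fun hh => haA' (mem_of_mem_erase hh)
        refine ⟨insert a (A'.erase a'), Function.update θ' a j,
          insert_subset (hRO ha) ((erase_subset _ _).trans hA'O), ?_, ?_, ?_, ?_, ?_, ?_⟩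
        · simp [hac.symm]
        · rw [card_insert_of_notMem haE, card_erase_add_one hcA', hA'c]
        · intro s hs
          rcases mem_insert.1 hs with rfl | hs
          · simp
          · have hs' := mem_of_mem_erase hs
            rw [hne s hs']
            have := hθ' s hs'
            simp only [mem_union, mem_insert] at this ⊢
            tauto
        · rw [coe_insert, Set.injOn_insert (mt mem_coe.1 haE)]
          have hsub : ((A'.erase a' : Finset S) : Set S) ⊆ A' := coe_subset.2 (erase_subset _ _)
          refine ⟨(Set.EqOn.injOn_iff (fun s hs => hne s (hsub hs))).2 (hθ'i.mono hsub), ?_⟩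
          rintro ⟨s, hs, hs'⟩
          rw [hne s (hsub hs), Function.update_self] at hs'
          have := hθ' s (hsub hs)
          rw [hs', mem_union] at this
          tauto
        · rw [← hθ'B, ← insert_erase hcA', image_insert, erase_insert (notMem_erase _ _),
            image_insert]
          congr 1
          · simp only [Function.update_self, hcθ, hcb]
          · refine image_congr fun s hs => ?_
            simp only [hne s (mem_of_mem_erase hs)]
        · intro x hx hxR
          rw [mem_insert, not_or] at hxR
          obtain ⟨h1, h2⟩ := hag x hx hxR.2
          exact ⟨mem_insert_of_mem (mem_erase.2 ⟨hxR.1, h1⟩), by rw [hne x h1, h2]⟩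
      · obtain ⟨A', θ', h1, h2, h3, h4, h5, h6, h7⟩ := hM a' ha'
        refine ⟨A', θ', h1, h2, h3, ?_, h5, h6, ?_⟩
        · intro s hs
          have := h4 s hs
          simp only [mem_union, mem_insert] at this ⊢
          tauto
        · exact fun x hx hxR => h7 x hx fun hh => hxR (mem_insert_of_mem hh)
  obtain ⟨R, J, hRO, -, -, -, hR, -⟩ := key (#A + 1) le_rfl
  have := card_le_card hRO
  omega

/-- Drisko's theorem: from `2m - 1` permutations of an `m`-element set `O` one can choose a full
rainbow matching. It is enough that the maps are injective on `O`, and `θ₀` only serves as a junk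
value for the empty matching. -/
lemma exists_rainbow_perm {S ι : Type*} [DecidableEq S] [DecidableEq ι] (π : ι → S → S)
    (O : Finset S) (hinj : ∀ i, Set.InjOn (π i) O)
    (X : Finset ι) (hX : 2 * #O ≤ #X + 1) (θ₀ : S → ι) :
    ∃ θ, IsRainbow π X O θ := by
  have key : ∀ k, k ≤ #O → ∃ A θ, A ⊆ O ∧ #A = k ∧ IsRainbow π X A θ := by
    intro k
    induction k with
    | zero => exact fun _ => ⟨∅, θ₀, empty_subset _, rfl, by simp, by simp, by simp⟩
    | succ k ih =>
      intro hk
      obtain ⟨A, θ, hA, rfl, h⟩ := ih (by omega)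
      exact exists_augment π O hinj X hX A hA (by omega) θ h
  obtain ⟨A, θ, hA, hc, h⟩ := key _ le_rfl
  obtain rfl := eq_of_subset_of_card_le hA hc.ge
  exact ⟨θ, h⟩

/-- The orbit of `s` under the action `φ`, as a finset. -/
def orb {H S : Type*} [Group H] [Fintype H] [DecidableEq S] (φ : H →* Equiv.Perm S) (s : S) :
    Finset S :=
  univ.image fun h => φ h s

section orbits

variable {H S : Type*} [Group H] [Fintype H] [DecidableEq S] (φ : H →* Equiv.Perm S)

lemma mem_orb_self (s : S) : s ∈ orb φ s := mem_image.2 ⟨1, mem_univ _, by simp⟩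

lemma apply_mem_orb (h : H) {s t : S} (ht : t ∈ orb φ s) : φ h t ∈ orb φ s := by
  obtain ⟨g, -, rfl⟩ := mem_image.1 ht
  exact mem_image.2 ⟨h * g, mem_univ _, by simp⟩

lemma apply_mem_orb_iff (h : H) {s t : S} : φ h t ∈ orb φ s ↔ t ∈ orb φ s := by
  refine ⟨fun ht => ?_, apply_mem_orb φ h⟩
  simpa using apply_mem_orb φ h⁻¹ ht

lemma card_orb_dvd (s : S) : #(orb φ s) ∣ Fintype.card H := by
  classical
  let _ : MulAction H S := MulAction.compHom S φ
  have : Fintype (MulAction.orbit H s) := (Set.finite_range _).fintype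
  have h := MulAction.card_orbit_mul_card_stabilizer_eq_card_group H s
  have e : #(orb φ s) = Fintype.card (MulAction.orbit H s) := by
    rw [← Set.toFinset_card]
    congr 1
    ext t
    simp only [orb, mem_image, mem_univ, true_and, Set.mem_toFinset]
    rfl
  exact e ▸ Dvd.intro _ h

/-- The greedy assignment on an invariant set `T` containing the fixed point `s₀`, with an arbitrary
set `X` of `#T` group elements. The hypothesis `hdvd` is inherited by `T` minus an orbit of maximal
size, since orbit sizes are powers of `p`. -/
lemma exists_greedy {p n : ℕ} (hp : p.Prime) (hH : Fintype.card H = p ^ n) (s₀ : S)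
    (hfix : ∀ h : H, φ h s₀ = s₀) (N : ℕ) :
    ∀ (T : Finset S) (X : Finset H), #T = N → #X = #T → s₀ ∈ T →
      (∀ h, ∀ s ∈ T, φ h s ∈ T) → (∀ s ∈ T, #(orb φ s) ∣ #T) →
      ∃ θ, IsRainbow (fun h s => φ h s) X T θ := by
  classical
  induction N using Nat.strong_induction_on with
  | _ N ih =>
  intro T X hTN hXT hs₀ hinv hdvd
  by_cases hT : T.erase s₀ = ∅
  · obtain rfl : T = {s₀} := by rw [← insert_erase hs₀, hT]; rfl
    exact exists_rainbow_perm _ _ (by simp) _ (by simp [hXT])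
      (fun _ => 1)
  obtain ⟨t, ht, hmax⟩ := exists_max_image (T.erase s₀) (fun s => #(orb φ s))
    (nonempty_iff_ne_empty.2 hT)
  obtain ⟨hts, htT⟩ := mem_erase.1 ht
  have hOT : orb φ t ⊆ T := by
    intro s hs
    obtain ⟨g, -, rfl⟩ := mem_image.1 hs
    exact hinv g t htT
  have hs₀O : s₀ ∉ orb φ t := by
    intro hs
    obtain ⟨g, -, hg⟩ := mem_image.1 hs
    exact hts ((φ g).injective (hg.trans (hfix g).symm))
  have hOpos : 0 < #(orb φ t) := card_pos.2 ⟨t, mem_orb_self φ t⟩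
  have hlt : #(orb φ t) < #T := card_lt_card ⟨hOT, fun hh => hs₀O (hh hs₀)⟩
  have h2 : 2 * #(orb φ t) ≤ #T := by
    obtain ⟨c, hc⟩ := hdvd t htT
    rw [hc] at hlt ⊢
    have : 1 < c := by
      by_contra hcc
      have : c ≤ 1 := by omega
      nlinarith
    nlinarith
  obtain ⟨θ₁, h₁⟩ := exists_rainbow_perm (fun h s => φ h s) (orb φ t)
    (fun i => (φ i).injective.injOn) X (by omega)
    (fun _ => 1)
  have hcardT : #(T \ orb φ t) = #T - #(orb φ t) := card_sdiff_of_subset hOT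
  have hsub : (orb φ t).image θ₁ ⊆ X := image_subset_iff.2 h₁.mapsTo
  obtain ⟨θ₂, h₂⟩ := ih #(T \ orb φ t) (by omega) (T \ orb φ t) (X \ (orb φ t).image θ₁) rfl
    (by rw [card_sdiff_of_subset hsub, card_image_iff.2 h₁.inj, hXT, hcardT])
    (mem_sdiff.2 ⟨hs₀, hs₀O⟩)
    (fun h s hs => mem_sdiff.2 ⟨hinv h s (mem_sdiff.1 hs).1,
      fun hh => (mem_sdiff.1 hs).2 ((apply_mem_orb_iff φ h).1 hh)⟩)
    (by
      intro s hs
      obtain ⟨hsT, -⟩ := mem_sdiff.1 hs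
      rw [hcardT]
      refine Nat.dvd_sub (hdvd s hsT) ?_
      have hle : #(orb φ s) ≤ #(orb φ t) := by
        by_cases hss : s = s₀
        · subst hss
          have : orb φ s = {s} := by
            ext x; simp [orb, hfix, eq_comm]
          rw [this, card_singleton]
          exact hOpos
        · exact hmax s (mem_erase.2 ⟨hss, hsT⟩)
      obtain ⟨a, -, ha⟩ := (Nat.dvd_prime_pow hp).1 (hH ▸ card_orb_dvd φ s)
      obtain ⟨b, -, hb⟩ := (Nat.dvd_prime_pow hp).1 (hH ▸ card_orb_dvd φ t)
      rw [ha, hb] at hle ⊢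
      exact pow_dvd_pow p ((Nat.pow_le_pow_iff_right hp.one_lt).1 hle))
  have hX₂ : ∀ s ∈ T, s ∉ orb φ t → θ₂ s ∈ X ∧ θ₂ s ∉ (orb φ t).image θ₁ := fun s hs hsO =>
    mem_sdiff.1 (h₂.mapsTo s (mem_sdiff.2 ⟨hs, hsO⟩))
  refine ⟨fun s => if s ∈ orb φ t then θ₁ s else θ₂ s, ?_, ?_, ?_⟩
  · intro s hs
    by_cases hsO : s ∈ orb φ t
    · simpa [hsO] using h₁.mapsTo s hsO
    · simpa [hsO] using (hX₂ s hs hsO).1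
  · intro s hs s' hs' e
    by_cases hsO : s ∈ orb φ t <;> by_cases hsO' : s' ∈ orb φ t <;>
      simp only [hsO, hsO', if_true, if_false] at e
    · exact h₁.inj hsO hsO' e
    · exact absurd (mem_image.2 ⟨s, hsO, e⟩) (hX₂ s' hs' hsO').2
    · exact absurd (mem_image.2 ⟨s', hsO', e.symm⟩) (hX₂ s hs hsO).2
    · exact h₂.inj (mem_coe.2 (mem_sdiff.2 ⟨hs, hsO⟩)) (mem_coe.2 (mem_sdiff.2 ⟨hs', hsO'⟩)) e
  · intro s hs s' hs' e
    by_cases hsO : s ∈ orb φ t <;> by_cases hsO' : s' ∈ orb φ t <;>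
      simp only [hsO, hsO', if_true, if_false] at e
    · exact h₁.inj_image hsO hsO' e
    · exact absurd ((apply_mem_orb_iff φ _).1 (e ▸ apply_mem_orb φ _ hsO)) hsO'
    · exact absurd ((apply_mem_orb_iff φ _).1 (e.symm ▸ apply_mem_orb φ _ hsO')) hsO
    · exact h₂.inj_image (mem_coe.2 (mem_sdiff.2 ⟨hs, hsO⟩))
        (mem_coe.2 (mem_sdiff.2 ⟨hs', hsO'⟩)) e

end orbits

theorem drisko {p : ℕ} (hp : p.Prime) (H : Type*) [Group H] [Finite H]
    (n : ℕ) (hH : Nat.card H = p ^ n)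
    (S : Type*) [Finite S] (hcard : Nat.card S = Nat.card H)
    (φ : H →* Equiv.Perm S) (s₀ : S) (hfix : ∀ h : H, φ h s₀ = s₀) :
    ∃ θ : S ≃ H, Function.Bijective (fun s : S => φ (θ s) s) := by
  classical
  have := Fintype.ofFinite H
  have := Fintype.ofFinite S
  rw [Nat.card_eq_fintype_card, Nat.card_eq_fintype_card] at hcard
  rw [Nat.card_eq_fintype_card] at hH
  obtain ⟨θ, h⟩ := exists_greedy φ hp hH s₀ hfix _ univ univ rfl
    (by rw [card_univ, card_univ, hcard]) (mem_univ _) (fun _ _ _ => mem_univ _)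
    (fun s _ => by rw [card_univ, hcard]; exact card_orb_dvd φ s)
  have hθ : Function.Injective θ := by simpa using h.inj
  refine ⟨Equiv.ofBijective θ ((Fintype.bijective_iff_injective_and_card θ).2 ⟨hθ, hcard⟩),
    Finite.injective_iff_bijective.1 ?_⟩
  simpa using h.inj_image
end

section
/- Let G be a group of order 64 containing a normal subgroup isomorphic to C₄ × C₄ (the direct product of two cyclic groups of order 4). Then G contains a Hadamard difference set. -/
/-!
Write `K ≅ (ℤ/4)²` and `T = {k ∈ K | k² = 1} = {1, t₁, t₂, t₃}`. There are four functions
`B₀, B₁, B₂, B₃ : K → {±1}` (`blk`) whose Fourier transforms have constant modulus `8` on the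
four cosets of the group of quadratic characters in the dual of `K`, and vanish elsewhere. Hence
distinct blocks have identically zero cross-correlation (`blk_cross`), while the autocorrelation
of `B_v` vanishes off `T`, equals `16` at `1` and `t_v`, and for `v ≠ 0` equals `-16` at the
other two elements of `T`.

Place the block `B_v` on the left coset `x_v K`, that is, let `f (x_v k) = B_v k` for a transversal
`x₀, …, x₃`. For `g ∉ K` the correlation `∑ y, f (g y) f y` is a sum of cross-correlations, so it
is zero. For `g ∈ K` it is the sum over `v` of the autocorrelations of `B_v` at `x_v⁻¹ g x_v`. If
`x_v` commutes with `t_v`, then this conjugation does not affect the autocorrelation of `B_v`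
(`blk_auto`), and the four autocorrelations add up to zero at every `g ≠ 1` (`blk_auto_sum`).
A `±1`-valued function with vanishing correlations at `g ≠ 1` is the same as a Hadamard
difference set (`hadamard_of_correlation`).

A suitable assignment of the blocks to the cosets exists (`exists_assignment`): as `G` is a
`2`-group, some `t_c` is central, so the other two involutions of `T` are each fixed or
interchanged by any element of `G`. Their centralizer contains `K` and has index at most `2`, so
it contains at least two of the four cosets of `K`; these two receive the other two nontrivial
blocks.
-/

namespace HadamardC4C4

/-- The additive model of `C₄ × C₄`. -/
abbrev Z := ZMod 4 × ZMod 4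

/-- The real part of `i ^ s` when `s` is even, and of `i ^ (s + 1)` times `(-1) ^ b` when `s` is
odd. -/
def half (s b : ZMod 4) : ℤ := (-1) ^ (s.val / 2 + s.val * (b.val + 1))

/-- The four `±1`-valued blocks on `C₄ × C₄`; block `v` is supported, on the Fourier side, on the
coset of the quadratic characters consisting of the characters trivial on `inv v` but, for
`v ≠ 0`, not on all elements of order two. -/
def blk (v : Fin 4) (u : Z) : ℤ :=
  match v with
  | 0 => (-1) ^ (u.1.val * u.2.val)
  | 1 => half u.2 u.1
  | 2 => half u.1 u.2
  | 3 => half (u.1 + u.2) u.2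

/-- The four solutions of `2 u = 0` in `C₄ × C₄`, with `inv 0 = 0`. -/
def inv (v : Fin 4) : Z :=
  match v with
  | 0 => (0, 0)
  | 1 => (2, 0)
  | 2 => (0, 2)
  | 3 => (2, 2)

/-- Closed form of the autocorrelation of `blk v`. -/
def auto (v : Fin 4) (u : Z) : ℤ :=
  if u + u = 0 then (if v = 0 ∨ u = 0 ∨ u = inv v then 16 else -16) else 0

lemma blk_sign : ∀ v u, blk v u = 1 ∨ blk v u = -1 := by decide +kernel

lemma blk_cross : ∀ v w, v ≠ w → ∀ u, ∑ k, blk v (u + k) * blk w k = 0 := by decide +kernel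

lemma blk_corr : ∀ v u, ∑ k, blk v (u + k) * blk v k = auto v u := by decide +kernel

/-- Zero sum of the autocorrelations off the identity. -/
lemma blk_auto_sum : ∀ u, u ≠ 0 → ∑ v, auto v u = 0 := by decide +kernel

/-- The autocorrelation of block `v` is invariant under automorphisms fixing `inv v`. -/
lemma blk_auto (v : Fin 4) (u u' : Z) (h0 : u = 0 ↔ u' = 0) (h2 : u + u = 0 ↔ u' + u' = 0)
    (hv : u = inv v ↔ u' = inv v) : auto v u = auto v u' := by
  simp only [auto, h0, h2, hv]

lemma exists_inv : ∀ u : Z, u + u = 0 → ∃ v, u = inv v := by decide +kernel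

lemma inv_add_self : ∀ v, inv v + inv v = 0 := by decide +kernel

lemma four_torsion : ∀ u : Z, (u + u) + (u + u) = 0 := by decide +kernel

/-- Besides `0` and `c` there are two indices `p` and `q`, and `inv p`, `inv q` differ by the
involution `inv c`. -/
lemma exists_other : ∀ c : Fin 4, c ≠ 0 → ∃ p q : Fin 4, p ≠ q ∧ p ≠ 0 ∧ p ≠ c ∧
    (∀ v, v = 0 ∨ v = c ∨ v = p ∨ v = q) ∧ inv q = inv p + inv c := by decide +kernel

lemma exists_perm : ∀ a b p q : Fin 4, a ≠ b → p ≠ q →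
    ∃ π : Equiv.Perm (Fin 4), π a = p ∧ π b = q := by decide +kernel

/-- A `±1`-valued function on a group of order `64` all of whose nontrivial correlations vanish
is `1` exactly on a Hadamard difference set. -/
lemma hadamard_of_correlation {G : Type*} [Group G] [Fintype G] (hG : Nat.card G = 64)
    (f : G → ℤ) (hf : ∀ x, f x = 1 ∨ f x = -1)
    (hc : ∀ g, g ≠ 1 → ∑ y, f (g * y) * f y = 0) :
    ∃ D : Set G, ∃ k l : ℕ,
    Nat.card D = k ∧
    (∀ g : G, g ≠ 1 → Nat.card {p : D × D // (p.1 : G) * (p.2 : G)⁻¹ = g} = l) ∧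
    Nat.card G + 4 * l = 4 * k := by
  classical
  set D : Set G := {x | f x = 1} with hD
  have hk : (64 : ℤ) + ∑ y, f y = 2 * (Nat.card D : ℤ) := by
    have h1 : Nat.card D = ∑ y : G, if f y = 1 then 1 else 0 := by
      rw [← Finset.card_filter, Nat.card_eq_fintype_card, Fintype.card_subtype]
      rfl
    have h2 : (64 : ℤ) = ∑ y : G, 1 := by
      rw [Finset.sum_const, Finset.card_univ, ← Nat.card_eq_fintype_card, hG]; norm_num
    rw [h1, h2, ← Finset.sum_add_distrib]
    push_cast
    rw [Finset.mul_sum]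
    refine Finset.sum_congr rfl fun y _ => ?_
    rcases hf y with h | h <;> simp [h]
  have key : ∀ g : G, g ≠ 1 →
      4 * Nat.card {p : D × D // (p.1 : G) * (p.2 : G)⁻¹ = g} + 64 = 4 * Nat.card D := by
    intro g hg
    have e : {p : D × D // (p.1 : G) * (p.2 : G)⁻¹ = g} ≃ {y : G // f (g * y) = 1 ∧ f y = 1} :=
      { toFun := fun p => ⟨p.1.2, by
          have h := p.2
          rw [mul_inv_eq_iff_eq_mul] at h
          exact ⟨h ▸ p.1.1.2, p.1.2.2⟩⟩
        invFun := fun y => ⟨(⟨g * y, y.2.1⟩, ⟨y, y.2.2⟩), by simp⟩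
        left_inv := by
          rintro ⟨⟨a, b⟩, h⟩
          rw [mul_inv_eq_iff_eq_mul] at h
          ext
          · exact h.symm
          · rfl
        right_inv := by
          rintro ⟨y, h⟩
          rfl }
    have h1 : Nat.card {p : D × D // (p.1 : G) * (p.2 : G)⁻¹ = g}
        = ∑ y : G, if f (g * y) = 1 ∧ f y = 1 then 1 else 0 := by
      rw [Nat.card_congr e, ← Finset.card_filter, Nat.card_eq_fintype_card,
        Fintype.card_subtype]
    have h2 : (64 : ℤ) = ∑ y : G, 1 := by
      rw [Finset.sum_const, Finset.card_univ, ← Nat.card_eq_fintype_card, hG]; norm_num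
    have h3 : ∑ y, f (g * y) = ∑ y, f y := Equiv.sum_comp (Equiv.mulLeft g) f
    have h4 : (4 : ℤ) * (Nat.card {p : D × D // (p.1 : G) * (p.2 : G)⁻¹ = g} : ℤ)
        = 64 + ∑ y, f (g * y) + ∑ y, f y + ∑ y, f (g * y) * f y := by
      rw [h1, h2, ← Finset.sum_add_distrib, ← Finset.sum_add_distrib, ← Finset.sum_add_distrib]
      push_cast
      rw [Finset.mul_sum]
      refine Finset.sum_congr rfl fun y _ => ?_
      rcases hf y with h | h <;> rcases hf (g * y) with h' | h' <;> simp [h, h']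
    rw [hc g hg, h3] at h4
    omega
  have : Nontrivial G := by
    rw [← Finite.one_lt_card_iff_nontrivial, hG]; norm_num
  obtain ⟨g₀, hg₀⟩ := exists_ne (1 : G)
  have h0 := key g₀ hg₀
  refine ⟨D, Nat.card D, Nat.card D - 16, rfl, fun g hg => ?_, ?_⟩
  · have := key g hg
    omega
  · omega

section

variable {G : Type*} [Group G] [Finite G] (K : Subgroup G) [K.Normal]
  (ι : Z → G)

/-- A normal `C₄ × C₄` in a `2`-group contains an involution that is central in the group. -/
lemma exists_central (hG : Nat.card G = 64) (hcard : Nat.card K = 16)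
    (hadd : ∀ a b, ι (a + b) = ι a * ι b) (h0 : ι 0 = 1)
    (hrange : ∀ x, x ∈ K ↔ ∃ u, ι u = x) :
    ∃ c : Fin 4, c ≠ 0 ∧ ∀ x, x * ι (inv c) = ι (inv c) * x := by
  have hp : IsPGroup 2 G := IsPGroup.of_card (n := 6) (by rw [hG]; norm_num)
  have : Fact (Nat.Prime 2) := ⟨Nat.prime_two⟩
  have hp' : IsPGroup 2 (ConjAct G) := hp
  have hfix : (1 : K) ∈ MulAction.fixedPoints (ConjAct G) K := by
    intro g
    simp
  obtain ⟨k, hk, hk1⟩ := hp'.exists_fixed_point_of_prime_dvd_card_of_fixed_point K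
    (by rw [hcard]; norm_num) hfix
  obtain ⟨u, hu⟩ := (hrange k).1 k.2
  have hcomm : ∀ x, x * ι u = ι u * x := by
    intro x
    have h := congrArg (Subtype.val) (hk (ConjAct.toConjAct x))
    rw [ConjAct.Subgroup.val_conj_smul, ConjAct.toConjAct_smul, ← hu, mul_inv_eq_iff_eq_mul] at h
    exact h
  have hu0 : u ≠ 0 := by
    rintro rfl
    apply hk1
    ext
    rw [← hu, h0]; rfl
  -- A central element of order 2 or 4 has itself or its square as a central involution.
  by_cases h2 : u + u = 0
  · obtain ⟨c, rfl⟩ := exists_inv u h2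
    exact ⟨c, by rintro rfl; exact hu0 rfl, hcomm⟩
  · obtain ⟨c, hc⟩ := exists_inv (u + u) (four_torsion u)
    refine ⟨c, by rintro rfl; exact h2 hc, fun x => ?_⟩
    rw [← hc, hadd, ← mul_assoc, hcomm, mul_assoc, hcomm, ← mul_assoc]

/-- The blocks can be assigned to the cosets of `K` in such a way that each coset centralizes
the involution attached to its block. -/
lemma exists_assignment (hG : Nat.card G = 64) (hcard : Nat.card K = 16)
    (hadd : ∀ a b, ι (a + b) = ι a * ι b) (h0 : ι 0 = 1) (hinj : Function.Injective ι)
    (hrange : ∀ x, x ∈ K ↔ ∃ u, ι u = x) :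
    ∃ σ : G ⧸ K ≃ Fin 4, ∀ x : G,
      x * ι (inv (σ (x : G ⧸ K))) = ι (inv (σ (x : G ⧸ K))) * x := by
  have hQ : Nat.card (G ⧸ K) = 4 := by
    have := K.card_eq_card_quotient_mul_card_subgroup
    rw [hG, hcard] at this
    omega
  obtain ⟨c, hc0, hc⟩ := exists_central K ι hG hcard hadd h0 hrange
  obtain ⟨p, q, hpq, hp0, hpc, hall, hq⟩ := exists_other c hc0
  have hinv : Function.Injective inv := by decide +kernel
  -- Conjugation permutes the involutions of `K` and fixes `inv c`.
  have hconj : ∀ x : G, x * ι (inv p) * x⁻¹ = ι (inv p) ∨ x * ι (inv p) * x⁻¹ = ι (inv q) := by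
    intro x
    obtain ⟨u, hu⟩ := (hrange (x * ι (inv p) * x⁻¹)).1
      (Subgroup.Normal.conj_mem inferInstance _ ((hrange _).2 ⟨_, rfl⟩) x)
    have huu : u + u = 0 := by
      apply hinj
      rw [hadd, hu, h0]
      have : ι (inv p) * ι (inv p) = 1 := by rw [← hadd, inv_add_self, h0]
      calc _ = x * (ι (inv p) * ι (inv p)) * x⁻¹ := by group
        _ = 1 := by rw [this]; group
    obtain ⟨v, rfl⟩ := exists_inv u huu
    rcases hall v with rfl | rfl | rfl | rfl
    · exfalso
      have h1 : ι (inv 0) = 1 := h0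
      rw [h1] at hu
      have h2 : ι (inv p) = ι (inv 0) := by
        rw [h1]
        exact (conj_eq_one_iff.1 hu.symm)
      exact hp0 (hinv (hinj h2))
    · exfalso
      have h2 : ι (inv p) = ι (inv v) := by
        have h3 := eq_mul_inv_iff_mul_eq.1 hu
        rw [← hc x] at h3
        exact (mul_left_cancel h3).symm
      exact hpc (hinv (hinj h2))
    · exact Or.inl hu.symm
    · exact Or.inr hu.symm
  have hqc : ∀ x : G, x * ι (inv p) = ι (inv p) * x → x * ι (inv q) = ι (inv q) * x := by
    intro x hx
    rw [hq, hadd, ← mul_assoc, hx, mul_assoc, hc, mul_assoc]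
  -- A coset of `K` other than `K` itself that centralizes `inv p`.
  have hex : ∃ x : G, x ∉ K ∧ x * ι (inv p) = ι (inv p) * x := by
    obtain ⟨s⟩ : Nonempty (G ⧸ K ≃ Fin 4) := ⟨Finite.equivFinOfCardEq hQ⟩
    have h3 : ∀ a : Fin 4, ∃ b d : Fin 4, b ≠ a ∧ d ≠ a ∧ b ≠ d := by decide
    obtain ⟨b, d, hb, hd, hbd⟩ := h3 (s ((1 : G) : G ⧸ K))
    obtain ⟨y, hy⟩ := QuotientGroup.mk_surjective (s.symm b)
    obtain ⟨z, hz⟩ := QuotientGroup.mk_surjective (s.symm d)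
    have hyK : y ∉ K := by
      intro h
      rw [(QuotientGroup.eq_one_iff y).2 h] at hy
      exact hb (s.symm_apply_eq.1 hy.symm)
    have hzK : z ∉ K := by
      intro h
      rw [(QuotientGroup.eq_one_iff z).2 h] at hz
      exact hd (s.symm_apply_eq.1 hz.symm)
    have hyz : y⁻¹ * z ∉ K := by
      intro h
      have := QuotientGroup.eq.2 h
      rw [hy, hz] at this
      exact hbd (s.symm.injective this)
    rcases hconj y with h | h
    · exact ⟨y, hyK, mul_inv_eq_iff_eq_mul.1 h⟩
    rcases hconj z with h' | h'
    · exact ⟨z, hzK, mul_inv_eq_iff_eq_mul.1 h'⟩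
    refine ⟨y⁻¹ * z, hyz, ?_⟩
    have h1 := h'.trans h.symm
    rw [mul_inv_eq_iff_eq_mul] at h1
    rw [mul_assoc, h1]
    group
  obtain ⟨x₀, hx₀, hx₀c⟩ := hex
  obtain ⟨s⟩ : Nonempty (G ⧸ K ≃ Fin 4) := ⟨Finite.equivFinOfCardEq hQ⟩
  have hne : s ((1 : G) : G ⧸ K) ≠ s (x₀ : G ⧸ K) := by
    intro h
    have := s.injective h
    rw [QuotientGroup.eq] at this
    simp at this
    exact hx₀ this
  obtain ⟨π, hπp, hπq⟩ := exists_perm _ _ p q hne hpq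
  have hKc : ∀ k ∈ K, k * ι (inv p) = ι (inv p) * k := by
    intro k hk
    obtain ⟨u, rfl⟩ := (hrange k).1 hk
    rw [← hadd, ← hadd, add_comm]
  refine ⟨s.trans π, fun x => ?_⟩
  rcases hall ((s.trans π) (x : G ⧸ K)) with h | h | h | h
  · rw [h]
    have h1 : ι (inv 0) = 1 := h0
    rw [h1, mul_one, one_mul]
  · rw [h]; exact hc x
  · rw [h]
    apply hKc
    have h1 : ((1 : G) : G ⧸ K) = (x : G ⧸ K) :=
      (s.trans π).injective (by rw [h]; exact hπp)
    rw [QuotientGroup.eq] at h1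
    simpa using h1
  · rw [h]
    apply hqc
    have h1 : (x₀ : G ⧸ K) = (x : G ⧸ K) :=
      (s.trans π).injective (by rw [h]; exact hπq)
    rw [QuotientGroup.eq] at h1
    have h2 := hKc _ h1
    calc x * ι (inv p) = x₀ * ((x₀⁻¹ * x) * ι (inv p)) := by group
      _ = (x₀ * ι (inv p)) * (x₀⁻¹ * x) := by rw [h2]; group
      _ = ι (inv p) * x := by rw [hx₀c]; group

/-- Placing the blocks on the cosets of `K` according to `exists_assignment` yields a
`±1`-valued function with vanishing correlations. -/
lemma exists_function [Fintype G] (hG : Nat.card G = 64) (hcard : Nat.card K = 16)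
    (hadd : ∀ a b, ι (a + b) = ι a * ι b) (h0 : ι 0 = 1) (hinj : Function.Injective ι)
    (hrange : ∀ x, x ∈ K ↔ ∃ u, ι u = x) :
    ∃ f : G → ℤ, (∀ x, f x = 1 ∨ f x = -1) ∧ ∀ g, g ≠ 1 → ∑ y, f (g * y) * f y = 0 := by
  classical
  obtain ⟨σ, hσ⟩ := exists_assignment K ι hG hcard hadd h0 hinj hrange
  have : Fintype (G ⧸ K) := Fintype.ofFinite _
  have hιK : ∀ u, ι u ∈ K := fun u => (hrange _).2 ⟨u, rfl⟩
  have hmk : ∀ (q : G ⧸ K) (u : Z), ((q.out * ι u : G) : G ⧸ K) = q := by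
    intro q u
    rw [QuotientGroup.mk_mul_of_mem _ (hιK u)]
    exact q.out_eq'
  have hbij : Function.Bijective (fun r : (G ⧸ K) × Z => r.1.out * ι r.2) := by
    constructor
    · rintro ⟨q, u⟩ ⟨q', u'⟩ h
      have h1 : q = q' := by
        have := congrArg (fun x : G => (x : G ⧸ K)) h
        simpa only [hmk] using this
      subst h1
      have h2 : ι u = ι u' := mul_left_cancel h
      rw [hinj h2]
    · intro x
      have h1 : (((x : G ⧸ K).out : G) : G ⧸ K) = x := (x : G ⧸ K).out_eq'
      rw [QuotientGroup.eq] at h1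
      obtain ⟨u, hu⟩ := (hrange _).1 h1
      exact ⟨(x, u), by simp [hu]⟩
  let E : (G ⧸ K) × Z ≃ G := Equiv.ofBijective _ hbij
  have hE : ∀ q u, E (q, u) = q.out * ι u := fun _ _ => rfl
  let f : G → ℤ := fun x => blk (σ (E.symm x).1) (E.symm x).2
  have hfE : ∀ q u, f (E (q, u)) = blk (σ q) u := by
    intro q u
    simp [f]
  refine ⟨f, fun x => blk_sign _ _, fun g hg => ?_⟩
  have hstep : ∀ q u, f (g * E (q, u)) =
      blk (σ (E.symm (g * q.out)).1) ((E.symm (g * q.out)).2 + u) := by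
    intro q u
    rw [← hfE]
    congr 1
    have h1 : E ((E.symm (g * q.out)).1, (E.symm (g * q.out)).2) = g * q.out := by simp
    rw [hE] at h1
    rw [hE, hE, hadd, ← mul_assoc, ← mul_assoc, h1]
  rw [← Equiv.sum_comp E, Fintype.sum_prod_type]
  simp only [hstep, hfE]
  by_cases hgK : g ∈ K
  · obtain ⟨w, rfl⟩ := (hrange g).1 hgK
    have hw : w ≠ 0 := by
      rintro rfl
      exact hg h0
    rw [← blk_auto_sum w hw, ← Equiv.sum_comp σ]
    refine Finset.sum_congr rfl fun q _ => ?_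
    obtain ⟨u, hu⟩ := (hrange (q.out⁻¹ * ι w * q.out)).1 (by
      simpa using Subgroup.Normal.conj_mem inferInstance _ hgK (q.out⁻¹))
    have h1 : E.symm (ι w * q.out) = (q, u) := by
      rw [Equiv.symm_apply_eq, hE, hu]
      group
    rw [h1]
    dsimp only
    rw [blk_corr]
    -- `u` is the image of `w` under conjugation by `q.out⁻¹`, so it suffices to compare the
    -- defining conditions of the autocorrelation at `u` and at `w`.
    have hcj : ∀ a b : Z, ι b * q.out = q.out * ι b →
        (ι a = ι b ↔ q.out⁻¹ * ι a * q.out = ι b) := by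
      intro a b hb
      rw [mul_assoc, inv_mul_eq_iff_eq_mul, ← hb, mul_left_inj]
    have hz : ι 0 * q.out = q.out * ι 0 := by rw [h0, one_mul, mul_one]
    have hq : ((q.out : G) : G ⧸ K) = q := q.out_eq'
    have hv := hσ q.out
    rw [hq] at hv
    symm
    apply blk_auto
    · rw [← hinj.eq_iff, ← hinj.eq_iff (a := u), hu]
      exact hcj w 0 hz
    · rw [← hinj.eq_iff, ← hinj.eq_iff (a := u + u), hadd u u, hu]
      rw [hcj (w + w) 0 hz, hadd w w]
      have : q.out⁻¹ * (ι w * ι w) * q.out =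
        q.out⁻¹ * ι w * q.out * (q.out⁻¹ * ι w * q.out) := by group
      rw [this]
    · rw [← hinj.eq_iff, ← hinj.eq_iff (a := u), hu]
      exact hcj w _ hv.symm
  · refine Finset.sum_eq_zero fun q _ => blk_cross _ _ (fun h => hgK ?_) _
    have h1 : (E.symm (g * q.out)).1 = q := σ.injective h
    have h2 : E ((E.symm (g * q.out)).1, (E.symm (g * q.out)).2) = g * q.out := by simp
    rw [h1, hE] at h2
    have h3 : g = q.out * ι (E.symm (g * q.out)).2 * q.out⁻¹ := by rw [h2]; group
    rw [h3]
    exact Subgroup.Normal.conj_mem inferInstance _ (hιK _) _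

end

end HadamardC4C4

theorem order64_with_normal_C4xC4 {G : Type*} [Group G] [Finite G]
    (hG : Nat.card G = 64) (K : Subgroup G) [K.Normal]
    (hK : Nonempty (K ≃* Multiplicative (ZMod 4 × ZMod 4))) :
    IsHadamardGroup G := by
  classical
  have := Fintype.ofFinite G
  obtain ⟨e⟩ := hK
  have hcard : Nat.card K = 16 := by
    rw [Nat.card_congr e.toEquiv]
    change Nat.card (ZMod 4 × ZMod 4) = 16
    simp
  obtain ⟨f, hf, hc⟩ := HadamardC4C4.exists_function K
    (fun u => (e.symm (Multiplicative.ofAdd u) : G)) hG hcard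
    (fun a b => by simp [ofAdd_add])
    (by simp)
    (fun a b h => by simpa using h)
    (fun x => ⟨fun hx => ⟨(e ⟨x, hx⟩).toAdd, by simp⟩, by
      rintro ⟨u, rfl⟩
      exact (e.symm _).2⟩)
  exact HadamardC4C4.hadamard_of_correlation hG f hf hc
end
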